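/- arXiv:1506.08041 — 3 statements merged into one kernel-verified Lean document; each statement's English description precedes it below -/
import Mathlib

section
/- Let N be a natural number and let (u_n) be a sequence of harmonic functions on the open unit disc 𝔻 ⊂ ℝ², none identically zero, such that for each n the number of connected components of 𝔻 ∖ Z(u_n) is less than N. Then there exist a subsequence (u_{n_k}), a sequence of nonzero real numbers (α_{n_k}), and a harmonic function u on 𝔻, not identically zero, such that α_{n_k} u_{n_k} converges to u uniformly on every compact subset of 𝔻. -/
open Metric Set Filter

noncomputable section

abbrev En (n : ℕ) : Type := EuclideanSpace ℝ (Fin n)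

/-- The Laplacian of `u` at `x`, computed from the second iterated Fréchet derivative. -/
def laplacianAt {n : ℕ} (u : En n → ℝ) (x : En n) : ℝ :=
  ∑ i : Fin n, iteratedFDeriv ℝ 2 u x ![EuclideanSpace.single i 1, EuclideanSpace.single i 1]

/-- `u` is harmonic on `Ω`: twice continuously differentiable with vanishing Laplacian. -/
def HarmonicOnSet {n : ℕ} (u : En n → ℝ) (Ω : Set (En n)) : Prop :=
  ContDiffOn ℝ 2 u Ω ∧ ∀ x ∈ Ω, laplacianAt u x = 0

/-- The zero set of `u` within `Ω`. -/
def zeroSet {n : ℕ} (u : En n → ℝ) (Ω : Set (En n)) : Set (En n) :=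
  {x ∈ Ω | u x = 0}

/-- The collection of nodal domains of `u` in `Ω`, i.e. the connected components of
`Ω \ Z(u)`. -/
def nodalComponents {n : ℕ} (u : En n → ℝ) (Ω : Set (En n)) : Set (Set (En n)) :=
  {C | ∃ x ∈ Ω \ zeroSet u Ω, C = connectedComponentIn (Ω \ zeroSet u Ω) x}

section

open Topology MeasureTheory

/-- `g` has a continuous logarithm on `K`. -/
def HasContinuousLogOn (g : ℂ → ℂ) (K : Set ℂ) : Prop :=
  ∃ L : ℂ → ℂ, ContinuousOn L K ∧ ∀ z ∈ K, Complex.exp (L z) = g z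

lemma HasContinuousLogOn.of_near {K : Set ℂ} {w w' : ℂ} (hK : ∀ z ∈ K, ‖w - w'‖ < ‖z - w‖)
    (h : HasContinuousLogOn (· - w) K) : HasContinuousLogOn (· - w') K := by
  obtain ⟨L, hL, hexp⟩ := h
  have hne : ∀ z ∈ K, z - w ≠ 0 := fun z hz h0 => by
    have := hK z hz
    rw [h0, norm_zero] at this
    exact (norm_nonneg _).not_gt this
  have hslit : ∀ z ∈ K, 1 + (w - w') / (z - w) ∈ Complex.slitPlane := fun z hz => by
    apply Complex.mem_slitPlane_of_norm_lt_one
    rw [norm_div, div_lt_one (norm_pos_iff.2 (hne z hz))]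
    exact hK z hz
  refine ⟨fun z => L z + Complex.log (1 + (w - w') / (z - w)), ?_, fun z hz => ?_⟩
  · refine hL.add (ContinuousOn.clog ?_ hslit)
    exact continuousOn_const.add
      (continuousOn_const.div (continuousOn_id.sub continuousOn_const) hne)
  · rw [Complex.exp_add, hexp z hz, Complex.exp_log (Complex.slitPlane_ne_zero (hslit z hz))]
    have := hne z hz
    field_simp
    ring

lemma hasContinuousLogOn_of_far {K : Set ℂ} {w : ℂ} (hK : ∀ z ∈ K, ‖z‖ < ‖w‖) :
    HasContinuousLogOn (· - w) K := by
  by_cases hw : w = 0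
  · refine ⟨0, continuousOn_const, fun z hz => ?_⟩
    have := hK z hz
    rw [hw, norm_zero] at this
    exact absurd this (norm_nonneg _).not_gt
  have hslit : ∀ z ∈ K, 1 + -(z / w) ∈ Complex.slitPlane := fun z hz => by
    apply Complex.mem_slitPlane_of_norm_lt_one
    rw [norm_neg, norm_div, div_lt_one (norm_pos_iff.2 hw)]
    exact hK z hz
  refine ⟨fun z => Complex.log (-w) + Complex.log (1 + -(z / w)), ?_, fun z hz => ?_⟩
  · refine continuousOn_const.add (ContinuousOn.clog (by fun_prop) hslit)
  · rw [Complex.exp_add, Complex.exp_log (neg_ne_zero.2 hw),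
      Complex.exp_log (Complex.slitPlane_ne_zero (hslit z hz))]
    field_simp
    ring

lemma eventually_hasContinuousLogOn_iff {K : Set ℂ} (hK : IsCompact K) {w : ℂ} (hw : w ∉ K) :
    ∀ᶠ w' in 𝓝 w, w' ∉ K ∧
      (HasContinuousLogOn (· - w') K ↔ HasContinuousLogOn (· - w) K) := by
  obtain ⟨ε, hε, hball⟩ := Metric.isOpen_iff.1 hK.isClosed.isOpen_compl w hw
  filter_upwards [Metric.ball_mem_nhds w (half_pos hε)] with w' hw'
  rw [mem_ball, dist_eq_norm] at hw'
  have hfar : ∀ z ∈ K, ε ≤ ‖z - w‖ := fun z hz => by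
    by_contra hlt
    exact hball (by rwa [mem_ball, dist_eq_norm, ← not_le]) hz
  have hfar' : ∀ z ∈ K, ε / 2 < ‖z - w'‖ := fun z hz => by
    have h1 := hfar z hz
    have h2 : ‖z - w‖ ≤ ‖z - w'‖ + ‖w' - w‖ := by
      simpa using norm_add_le (z - w') (w' - w)
    linarith
  refine ⟨fun hz => ?_, ⟨fun h => ?_, fun h => ?_⟩⟩
  · have := hfar' w' hz
    simp at this
    linarith
  · exact h.of_near fun z hz => hw'.trans (hfar' z hz)
  · refine h.of_near fun z hz => ?_
    rw [norm_sub_rev]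
    linarith [hfar z hz]

/-- If a compact set `K` meets the zero set of `Re f` only at zeros of `f`, then it does not wind
around any point of that zero set where `0 < Im f`. -/
lemma hasContinuousLogOn_of_im_pos {f : ℂ → ℂ} (hf : AnalyticOnNhd ℂ f (ball 0 1))
    (hnc : ¬ ∃ c, ∀ z ∈ ball (0 : ℂ) 1, f z = c) {K : Set ℂ} (hK : IsCompact K)
    (hKD : K ⊆ ball 0 1) (hKf : ∀ z ∈ K, (f z).re = 0 → f z = 0) {w : ℂ}
    (hre : (f w).re = 0) (him : 0 < (f w).im) : HasContinuousLogOn (· - w) K := by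
  by_contra hlog
  obtain ⟨ρ, hρ0, hρ1, hKρ⟩ : ∃ ρ : ℝ, 0 ≤ ρ ∧ ρ < 1 ∧ K ⊆ closedBall 0 ρ := by
    rcases K.eq_empty_or_nonempty with rfl | hne
    · exact ⟨0, le_rfl, one_pos, empty_subset _⟩
    · obtain ⟨x, hx, hmax⟩ := hK.exists_isMaxOn hne continuous_norm.continuousOn
      exact ⟨‖x‖, norm_nonneg _, by simpa using hKD hx, fun y hy => by simpa using hmax hy⟩
  have hfar : ∀ v, ¬ HasContinuousLogOn (· - v) K → v ∈ closedBall (0 : ℂ) ρ := fun v hv => by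
    by_contra hvρ
    rw [mem_closedBall_zero_iff, not_le] at hvρ
    exact hv (hasContinuousLogOn_of_far fun z hz =>
      (mem_closedBall_zero_iff.1 (hKρ hz)).trans_lt hvρ)
  set B : Set ℂ := {v | v ∈ K ∨ ¬ HasContinuousLogOn (· - v) K} with hB
  have hBclosed : IsClosed B := by
    rw [← isOpen_compl_iff, isOpen_iff_mem_nhds]
    intro v hv
    simp only [hB, mem_compl_iff, mem_ofPred_eq, not_or, not_not] at hv
    filter_upwards [eventually_hasContinuousLogOn_iff hK hv.1] with v' hv'
    simp only [hB, mem_compl_iff, mem_ofPred_eq, not_or, not_not]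
    exact ⟨hv'.1, hv'.2.2 hv.2⟩
  have hsub : closedBall (0 : ℂ) ρ ⊆ ball 0 1 := closedBall_subset_ball hρ1
  have hcont : ContinuousOn f (closedBall 0 ρ) := hf.continuousOn.mono hsub
  set T : Set ℂ := (closedBall (0 : ℂ) ρ ∩ f ⁻¹' {ζ | ζ.re = 0 ∧ (f w).im ≤ ζ.im}) ∩ B with hT
  have hTc : IsCompact T := by
    refine IsCompact.inter_right ?_ hBclosed
    refine (isCompact_closedBall (0 : ℂ) ρ).of_isClosed_subset ?_ inter_subset_left
    refine hcont.preimage_isClosed_of_isClosed isClosed_closedBall ?_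
    exact (isClosed_eq Complex.continuous_re continuous_const).inter
      (isClosed_le continuous_const Complex.continuous_im)
  obtain ⟨v, hvT, hmax⟩ := hTc.exists_isMaxOn (f := fun z => (f z).im)
    ⟨w, ⟨hfar w hlog, hre, le_rfl⟩, Or.inr hlog⟩
    (Complex.continuous_im.comp_continuousOn
      (hcont.mono (inter_subset_left.trans inter_subset_left)))
  obtain ⟨⟨hvρ, hvre, hvim⟩, hvB⟩ := hvT
  have hvK : v ∉ K := fun h => by
    have := hKf v h hvre
    simp only [this, Complex.zero_im] at hvim
    linarith
  have hvlog : ¬ HasContinuousLogOn (· - v) K := hvB.resolve_left hvK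
  have hopen : 𝓝 (f v) ≤ map f (𝓝 v) := by
    refine (hf v (hsub hvρ)).eventually_constant_or_nhds_le_map_nhds.resolve_left fun h => ?_
    exact hnc ⟨f v, fun z hz => hf.eqOn_of_preconnected_of_eventuallyEq analyticOnNhd_const
      (convex_ball _ _).isPreconnected (hsub hvρ) h hz⟩
  have hnear : {v' | ¬ HasContinuousLogOn (· - v') K} ∈ 𝓝 v := by
    filter_upwards [eventually_hasContinuousLogOn_iff hK hvK] with v' hv'
    exact fun h => hvlog (hv'.2.1 h)
  have himage : f '' {v' | ¬ HasContinuousLogOn (· - v') K} ∈ 𝓝 (f v) :=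
    hopen (image_mem_map hnear)
  have hlim : Tendsto (fun t : ℝ => f v + t * Complex.I) (𝓝[>] 0) (𝓝 (f v)) := by
    have : Tendsto (fun t : ℝ => f v + t * Complex.I) (𝓝 0) (𝓝 (f v + (0 : ℝ) * Complex.I)) :=
      (Continuous.tendsto (by fun_prop) 0)
    simp only [Complex.ofReal_zero, zero_mul, add_zero] at this
    exact this.mono_left nhdsWithin_le_nhds
  obtain ⟨t, ht, ht0⟩ := ((hlim.eventually himage).and self_mem_nhdsWithin).exists
  obtain ⟨v', hv', hfv'⟩ := ht
  have him' : (f v').im = (f v).im + t := by simp [hfv']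
  have hv'T : v' ∈ T := by
    refine ⟨⟨hfar v' hv', ?_, ?_⟩, Or.inr hv'⟩
    · simp only [hfv']
      simp [hvre]
    · rw [him']
      have : (0 : ℝ) < t := ht0
      linarith
  have := hmax hv'T
  simp only [mem_ofPred_eq, him'] at this
  have : (0 : ℝ) < t := ht0
  linarith

lemma hasContinuousLogOn_of_im_ne_zero {f : ℂ → ℂ} (hf : AnalyticOnNhd ℂ f (ball 0 1))
    (hnc : ¬ ∃ c, ∀ z ∈ ball (0 : ℂ) 1, f z = c) {K : Set ℂ} (hK : IsCompact K)
    (hKD : K ⊆ ball 0 1) (hKf : ∀ z ∈ K, (f z).re = 0 → f z = 0) {w : ℂ}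
    (hre : (f w).re = 0) (him : (f w).im ≠ 0) : HasContinuousLogOn (· - w) K := by
  rcases him.lt_or_gt with h | h
  · refine hasContinuousLogOn_of_im_pos hf.neg (fun ⟨c, hc⟩ => hnc ⟨-c, fun z hz => ?_⟩) hK hKD
      (fun z hz h0 => ?_) (by simp [hre]) (by simpa using h)
    · simpa [neg_eq_iff_eq_neg] using hc z hz
    · simpa using hKf z hz (by simpa using h0)
  · exact hasContinuousLogOn_of_im_pos hf hnc hK hKD hKf hre h

lemma sub_eq_sub_of_exp_eq {X : Type*} [TopologicalSpace X] {S : Set X} (hS : IsPreconnected S)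
    {A B : X → ℂ} (hA : ContinuousOn A S) (hB : ContinuousOn B S)
    (h : ∀ x ∈ S, Complex.exp (A x) = Complex.exp (B x)) {x y : X} (hx : x ∈ S) (hy : y ∈ S) :
    A x - A y = B x - B y := by
  have key : A x - B x = A y - B y := by
    refine Complex.isCoveringMap_exp.constOn_of_comp (g := fun t => A t - B t) hS (hA.sub hB)
      (fun a ha a' ha' => ?_) hx hy
    simp [Complex.exp_sub, h a ha, h a' ha']
  linear_combination key

lemma abs_arg_le_pi_div_six {z : ℂ} (hz : 0 < z.re) (h : 2 * |z.im| ≤ ‖z‖) :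
    |Complex.arg z| ≤ Real.pi / 6 := by
  have hz0 : 0 < ‖z‖ := hz.trans_le (Complex.re_le_norm z)
  rw [Complex.arg_of_re_nonneg hz.le]
  have h1 : |z.im / ‖z‖| ≤ 1 / 2 := by
    rw [abs_div, abs_norm, div_le_iff₀ hz0]
    linarith
  have hs : Real.arcsin (1 / 2) = Real.pi / 6 := by
    rw [← Real.sin_pi_div_six, Real.arcsin_sin] <;> linarith [Real.pi_pos]
  rw [abs_le] at h1 ⊢
  refine ⟨?_, ?_⟩
  · rw [← hs, ← Real.arcsin_neg]
    exact Real.monotone_arcsin h1.1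
  · rw [← hs]
    exact Real.monotone_arcsin h1.2

lemma abs_arg_ofReal_add_le {s : ℝ} {α : ℂ} (hs : 0 < s) (hα : ‖α‖ ≤ s / 4) :
    |Complex.arg (s + α)| ≤ Real.pi / 6 := by
  have h1 := Complex.abs_re_le_norm α
  have h2 := Complex.abs_im_le_norm α
  have h3 : s ≤ ‖(s : ℂ) + α‖ + ‖α‖ := by
    have := norm_sub_le ((s : ℂ) + α) α
    simpa [abs_of_pos hs] using this
  refine abs_arg_le_pi_div_six ?_ ?_
  · have := (abs_le.1 h1).1
    simp only [Complex.add_re, Complex.ofReal_re]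
    linarith
  · simp only [Complex.add_im, Complex.ofReal_im, zero_add]
    linarith

/-- The logarithm of `(x - α) / (x - β)` gains more than `π` in imaginary part along a real
segment separating `α` from `β`. -/
lemma pi_lt_im_sub_of_exp_eq {s : ℝ} {α β : ℂ} (hα : 0 < α.im) (hβ : β.im < 0)
    (hs : 0 < s) (hαs : ‖α‖ ≤ s / 4) (hβs : ‖β‖ ≤ s / 4) {M : ℝ → ℂ}
    (hM : ContinuousOn M (Icc (-s) s))
    (hexp : ∀ x ∈ Icc (-s) s, Complex.exp (M x) = (x - α) / (x - β)) :
    Real.pi < (M s - M (-s)).im := by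
  have hsl1 : ∀ x : ℝ, (x : ℂ) - α ∈ Complex.slitPlane := fun x =>
    Complex.mem_slitPlane_iff.2 (Or.inr (by simp [hα.ne']))
  have hsl2 : ∀ x : ℝ, (x : ℂ) - β ∈ Complex.slitPlane := fun x =>
    Complex.mem_slitPlane_iff.2 (Or.inr (by simp [hβ.ne]))
  have heq := sub_eq_sub_of_exp_eq isPreconnected_Icc hM
    (B := fun x : ℝ => Complex.log (x - α) - Complex.log (x - β))
    ((ContinuousOn.clog (by fun_prop) fun x _ => hsl1 x).sub
      (ContinuousOn.clog (by fun_prop) fun x _ => hsl2 x))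
    (fun x hx => by
      rw [hexp x hx, Complex.exp_sub, Complex.exp_log (Complex.slitPlane_ne_zero (hsl1 x)),
        Complex.exp_log (Complex.slitPlane_ne_zero (hsl2 x))])
    (right_mem_Icc.2 (by linarith : -s ≤ s)) (left_mem_Icc.2 (by linarith : -s ≤ s))
  rw [heq]
  have e1 : ((-s : ℝ) : ℂ) - α = -(s + α) := by push_cast; ring
  have e2 : ((-s : ℝ) : ℂ) - β = -(s + β) := by push_cast; ring
  simp only [e1, e2, Complex.sub_im, Complex.log_im]
  rw [Complex.arg_neg_eq_arg_sub_pi_of_im_pos (by simpa using hα),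
    Complex.arg_neg_eq_arg_add_pi_of_im_neg (by simpa using hβ)]
  have a1 := abs_le.1 (abs_arg_ofReal_add_le hs hαs)
  have a2 := abs_le.1 (abs_arg_ofReal_add_le hs hβs)
  have a3 := abs_le.1 (abs_arg_ofReal_add_le (α := -α) hs (by simpa using hαs))
  have a4 := abs_le.1 (abs_arg_ofReal_add_le (α := -β) hs (by simpa using hβs))
  simp only [← sub_eq_add_neg] at a3 a4
  linarith [Real.pi_pos, a1.1, a1.2, a2.1, a2.2, a3.1, a3.2, a4.1, a4.2]

/-- A compact set containing a path from `z₁ + s d` to `z₁ - s d` that stays away from `z₁`, and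
the segment between these points, winds around a point close to `z₁` on at least one side. -/
lemma false_of_hasContinuousLogOn {z₁ d α β : ℂ} {s δ : ℝ} (hd : d ≠ 0)
    (hα : 0 < α.im) (hβ : β.im < 0) (hs : 0 < s) (hαs : ‖α‖ ≤ s / 4) (hβs : ‖β‖ ≤ s / 4)
    (hαδ : ‖d‖ * ‖α‖ ≤ δ / 4) (hβδ : ‖d‖ * ‖β‖ ≤ δ / 4) (hδ : 0 < δ)
    (p : Path (z₁ + d * s) (z₁ + d * (-s : ℝ))) (hp : ∀ t, δ ≤ ‖p t - z₁‖) {K : Set ℂ}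
    (hKp : range p ⊆ K) (hKs : ∀ x ∈ Icc (-s) s, z₁ + d * (x : ℝ) ∈ K)
    (ha : HasContinuousLogOn (· - (z₁ + d * α)) K)
    (hb : HasContinuousLogOn (· - (z₁ + d * β)) K) : False := by
  obtain ⟨A, hA, hAexp⟩ := ha
  obtain ⟨B, hB, hBexp⟩ := hb
  have hM : ContinuousOn (fun z => A z - B z) K := hA.sub hB
  have h1 := pi_lt_im_sub_of_exp_eq hα hβ hs hαs hβs
    (M := fun x : ℝ => A (z₁ + d * x) - B (z₁ + d * x))
    (hM.comp (f := fun x : ℝ => z₁ + d * (x : ℂ)) (by fun_prop) hKs) (fun x hx => by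
      rw [Complex.exp_sub, hAexp _ (hKs x hx), hBexp _ (hKs x hx)]
      beta_reduce
      rw [add_sub_add_left_eq_sub,
        add_sub_add_left_eq_sub, ← mul_sub, ← mul_sub, mul_div_mul_left _ _ hd])
  have hlt : ∀ t, ‖(d * (β - α)) / (p t - (z₁ + d * β))‖ < 1 ∧ p t - (z₁ + d * β) ≠ 0 := fun t => by
    have h2 : ‖d * (β - α)‖ ≤ δ / 2 := by
      rw [norm_mul]
      have := mul_le_mul_of_nonneg_left (norm_sub_le β α) (norm_nonneg d)
      linarith
    have h3 : δ ≤ ‖p t - (z₁ + d * β)‖ + δ / 4 := by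
      refine (hp t).trans ?_
      have := norm_add_le (p t - (z₁ + d * β)) (d * β)
      rw [norm_mul] at this
      have e : p t - (z₁ + d * β) + d * β = p t - z₁ := by ring
      rw [e] at this
      linarith
    have h4 : 0 < ‖p t - (z₁ + d * β)‖ := by linarith
    refine ⟨?_, norm_pos_iff.1 h4⟩
    rw [norm_div, div_lt_one h4]
    linarith
  have hsl : ∀ t, 1 + (d * (β - α)) / (p t - (z₁ + d * β)) ∈ Complex.slitPlane := fun t =>
    Complex.mem_slitPlane_of_norm_lt_one (hlt t).1
  have heq := sub_eq_sub_of_exp_eq (X := unitInterval) isPreconnected_univ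
    (A := fun t => A (p t) - B (p t))
    (B := fun t => Complex.log (1 + (d * (β - α)) / (p t - (z₁ + d * β))))
    (hM.comp p.continuous.continuousOn fun t _ => hKp (mem_range_self t))
    (ContinuousOn.clog (continuousOn_const.add (continuousOn_const.div
      (p.continuous.continuousOn.sub continuousOn_const) fun t _ => (hlt t).2)) fun t _ => hsl t)
    (fun t _ => by
      rw [Complex.exp_sub, hAexp _ (hKp (mem_range_self t)), hBexp _ (hKp (mem_range_self t)),
        Complex.exp_log (Complex.slitPlane_ne_zero (hsl t))]
      have := (hlt t).2
      field_simp
      ring) (mem_univ 0) (mem_univ 1)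
  simp only [p.source, p.target] at heq
  rw [heq] at h1
  have harg : ∀ t, |Complex.arg (1 + (d * (β - α)) / (p t - (z₁ + d * β)))| < Real.pi / 2 :=
    fun t => by
    refine Complex.abs_arg_lt_pi_div_two_iff.2 (Or.inl ?_)
    have := (abs_le.1 (Complex.abs_re_le_norm ((d * (β - α)) / (p t - (z₁ + d * β))))).1
    have := (hlt t).1
    simp only [Complex.add_re, Complex.one_re]
    linarith
  have g0 := abs_lt.1 (harg 0)
  have g1 := abs_lt.1 (harg 1)
  simp only [p.source, p.target] at g0 g1
  simp only [Complex.sub_im, Complex.log_im] at h1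
  linarith [g0.1, g0.2, g1.1, g1.2]

lemma exists_local_coordinate {f : ℂ → ℂ} (hf : AnalyticOnNhd ℂ f (ball 0 1)) {z₁ : ℂ}
    (hz₁ : z₁ ∈ ball (0 : ℂ) 1) (h0 : f z₁ = 0) (h1 : deriv f z₁ ≠ 0) :
    ∃ d : ℂ, d ≠ 0 ∧ ∃ s : ℝ, 0 < s ∧ ∀ t : ℂ, ‖t‖ ≤ s →
      z₁ + d * t ∈ ball (0 : ℂ) 1 ∧ ‖f (z₁ + d * t) - t‖ ≤ ‖t‖ / 4 := by
  have hd : HasDerivAt f (deriv f z₁) z₁ := (hf z₁ hz₁).differentiableAt.hasDerivAt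
  have hc : 0 < ‖deriv f z₁‖ / 4 := by positivity
  have hev := (hd.isLittleO.def hc).and (isOpen_ball.mem_nhds hz₁)
  obtain ⟨η, hη, hball⟩ := Metric.eventually_nhds_iff.1 hev
  refine ⟨(deriv f z₁)⁻¹, inv_ne_zero h1, ‖deriv f z₁‖ * η / 2, by positivity, fun t ht => ?_⟩
  have hdist : dist (z₁ + (deriv f z₁)⁻¹ * t) z₁ < η := by
    rw [dist_eq_norm, add_sub_cancel_left, norm_mul, norm_inv, inv_mul_lt_iff₀ (by positivity)]
    have : 0 < ‖deriv f z₁‖ * η := by positivity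
    linarith
  obtain ⟨h2, h3⟩ := hball hdist
  refine ⟨h3, ?_⟩
  rw [h0, add_sub_cancel_left, smul_eq_mul, mul_right_comm, inv_mul_cancel₀ h1, one_mul, sub_zero,
    norm_mul, norm_inv] at h2
  refine h2.trans_eq ?_
  have : ‖deriv f z₁‖ ≠ 0 := by positivity
  field_simp

lemma exists_re_eq_zero_im_ne_zero {g : ℂ → ℂ} {s e : ℝ} (hes : 2 * |e| ≤ s) (he : e ≠ 0)
    (hcont : ContinuousOn g (closedBall 0 s)) (hg : ∀ t : ℂ, ‖t‖ ≤ s → ‖g t - t‖ ≤ ‖t‖ / 4) :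
    ∃ t : ℂ, t.im = e ∧ ‖t‖ ≤ 2 * |e| ∧ (g t).re = 0 ∧ (g t).im ≠ 0 := by
  have he0 : 0 < |e| := abs_pos.2 he
  have hnorm : ∀ x ∈ Icc (-|e|) |e|, ‖(⟨x, e⟩ : ℂ)‖ ≤ 2 * |e| := fun x hx => by
    have := Complex.norm_le_abs_re_add_abs_im (⟨x, e⟩ : ℂ)
    have := abs_le.2 hx
    simp only at *
    linarith
  have hb : ∀ x ∈ Icc (-|e|) |e|, |(g ⟨x, e⟩).re - x| ≤ |e| / 2 ∧ |(g ⟨x, e⟩).im - e| ≤ |e| / 2 :=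
    fun x hx => by
    have h1 := hg ⟨x, e⟩ ((hnorm x hx).trans hes)
    have h2 := hnorm x hx
    have h3 := Complex.abs_re_le_norm (g ⟨x, e⟩ - ⟨x, e⟩)
    have h4 := Complex.abs_im_le_norm (g ⟨x, e⟩ - ⟨x, e⟩)
    simp only [Complex.sub_re, Complex.sub_im] at h3 h4
    exact ⟨by linarith, by linarith⟩
  have hle : -|e| ≤ |e| := by linarith
  have hc : ContinuousOn (fun x : ℝ => (g ⟨x, e⟩).re) (Icc (-|e|) |e|) := by
    refine Complex.continuous_re.comp_continuousOn (hcont.comp (f := fun x : ℝ => (⟨x, e⟩ : ℂ)) ?_ ?_)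
    · have : (fun x : ℝ => (⟨x, e⟩ : ℂ)) = fun x : ℝ => (x : ℂ) + e * Complex.I := by
        ext x
        exact Complex.mk_eq_add_mul_I x e
      rw [this]
      fun_prop
    · exact fun x hx => mem_closedBall_zero_iff.2 ((hnorm x hx).trans hes)
  have hivt := intermediate_value_Icc hle hc
  have l1 := abs_le.1 (hb _ (left_mem_Icc.2 hle)).1
  have l2 := abs_le.1 (hb _ (right_mem_Icc.2 hle)).1
  obtain ⟨x, hx, hx0⟩ := hivt (show (0 : ℝ) ∈ _ from ⟨by linarith [l1.2], by linarith [l2.1]⟩)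
  refine ⟨⟨x, e⟩, rfl, hnorm x hx, hx0, fun h => ?_⟩
  have := (hb x hx).2
  rw [h, zero_sub, abs_neg] at this
  linarith

/-- The two sides of a simple zero `z₁` of `f` cannot be connected in the complement of the
zero set of `Re f`, even after adding to it all zeros of `f` different from `z₁`. -/
lemma exists_not_joinedIn_of_simple_zero {f : ℂ → ℂ} (hf : AnalyticOnNhd ℂ f (ball 0 1))
    (hnc : ¬ ∃ c, ∀ z ∈ ball (0 : ℂ) 1, f z = c) {z₁ : ℂ}
    (hz₁ : z₁ ∈ ball (0 : ℂ) 1) (h0 : f z₁ = 0) (h1 : deriv f z₁ ≠ 0) :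
    ∃ c₁ c₂, (f c₁).re ≠ 0 ∧ (f c₂).re ≠ 0 ∧
      JoinedIn ({z ∈ ball (0 : ℂ) 1 | (f z).re ≠ 0} ∪ {z₁}) c₁ z₁ ∧
      JoinedIn ({z ∈ ball (0 : ℂ) 1 | (f z).re ≠ 0} ∪ {z₁}) c₂ z₁ ∧
      ¬ JoinedIn ({z ∈ ball (0 : ℂ) 1 | (f z).re = 0 → f z = 0} \ {z₁}) c₁ c₂ := by
  obtain ⟨d, hd, s, hs, hloc⟩ := exists_local_coordinate hf hz₁ h0 h1
  have hreal : ∀ x : ℝ, |x| ≤ s → x ≠ 0 → (f (z₁ + d * x)).re ≠ 0 := fun x hx hx0 h => by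
    have h2 := (hloc x (by simpa using hx)).2
    have h3 := (Complex.abs_re_le_norm _).trans h2
    have := abs_pos.2 hx0
    simp [h] at h3
    linarith
  have hjoin : ∀ x : ℝ, |x| ≤ s →
      JoinedIn ({z ∈ ball (0 : ℂ) 1 | (f z).re ≠ 0} ∪ {z₁}) (z₁ + d * x) z₁ := fun x hx => by
    refine JoinedIn.symm (JoinedIn.ofLine (f := fun τ : ℝ => z₁ + d * ((τ * x : ℝ) : ℂ)) (by fun_prop)
      (by simp) (by simp) ?_)
    rintro _ ⟨τ, hτ, rfl⟩
    have hle : |τ * x| ≤ s := by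
      rw [abs_mul, abs_of_nonneg hτ.1]
      exact (mul_le_of_le_one_left (abs_nonneg x) hτ.2).trans hx
    by_cases hτx : τ * x = 0
    · right
      simp [hτx]
    · left
      exact ⟨(hloc _ (by simpa using hle)).1, hreal _ hle hτx⟩
  have hss : |s| ≤ s := (abs_of_pos hs).le
  have hss' : |(-s)| ≤ s := by rw [abs_neg]; exact hss
  refine ⟨z₁ + d * s, z₁ + d * (-s : ℝ), hreal s hss hs.ne', hreal (-s) hss' (by linarith),
    hjoin s hss, hjoin (-s) hss', ?_⟩
  rintro ⟨p, hp⟩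
  obtain ⟨δ, hδ, hpδ⟩ : ∃ δ > 0, ∀ t, δ ≤ ‖p t - z₁‖ := by
    obtain ⟨t₀, -, ht₀⟩ := isCompact_univ.exists_isMinOn (f := fun t => ‖p t - z₁‖) univ_nonempty
      (by fun_prop)
    exact ⟨‖p t₀ - z₁‖, norm_pos_iff.2 (sub_ne_zero.2 (hp t₀).2), fun t => ht₀ (mem_univ t)⟩
  set K : Set ℂ := range p ∪ (fun x : ℝ => z₁ + d * (x : ℂ)) '' Icc (-s) s with hKdef
  have hK : IsCompact K :=
    (isCompact_range p.continuous).union (isCompact_Icc.image (by fun_prop))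
  have hKD : K ⊆ ball 0 1 := by
    rintro _ (⟨t, rfl⟩ | ⟨x, hx, rfl⟩)
    · exact (hp t).1.1
    · exact (hloc x (by simpa using abs_le.2 hx)).1
  have hKf : ∀ z ∈ K, (f z).re = 0 → f z = 0 := by
    rintro _ (⟨t, rfl⟩ | ⟨x, hx, rfl⟩)
    · exact (hp t).1.2
    · intro h
      by_contra hne
      refine hreal x (abs_le.2 hx) ?_ h
      rintro rfl
      simp [h0] at hne
  have hcont : ContinuousOn (fun t => f (z₁ + d * t)) (closedBall 0 s) :=
    hf.continuousOn.comp (by fun_prop) fun t ht => (hloc t (mem_closedBall_zero_iff.1 ht)).1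
  set ε : ℝ := min (s / 8) (δ / (8 * ‖d‖)) with hε
  have hd0 : 0 < ‖d‖ := norm_pos_iff.2 hd
  have hε0 : 0 < ε := by positivity
  have hε1 : ε ≤ s / 8 := min_le_left _ _
  have hε2 : ‖d‖ * ε ≤ δ / 8 := by
    have : ε ≤ δ / (8 * ‖d‖) := min_le_right _ _
    rw [le_div_iff₀ (by positivity)] at this
    linarith
  have habs : |ε| = ε := abs_of_pos hε0
  obtain ⟨α, hαi, hαn, hαre, hαim⟩ := exists_re_eq_zero_im_ne_zero (s := s) (e := ε)
    (by rw [habs]; linarith) hε0.ne' hcont fun t ht => (hloc t ht).2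
  obtain ⟨β, hβi, hβn, hβre, hβim⟩ := exists_re_eq_zero_im_ne_zero (s := s) (e := -ε)
    (by rw [abs_neg, habs]; linarith) (by linarith) hcont fun t ht => (hloc t ht).2
  rw [abs_neg] at hβn
  rw [habs] at hαn hβn
  have hα' := mul_le_mul_of_nonneg_left hαn hd0.le
  have hβ' := mul_le_mul_of_nonneg_left hβn hd0.le
  exact false_of_hasContinuousLogOn hd (by linarith) (by linarith) hs (by linarith) (by linarith)
    (by linarith) (by linarith) hδ p hpδ (K := K) subset_union_left
    (fun x hx => Or.inr ⟨x, hx, rfl⟩)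
    (hasContinuousLogOn_of_im_ne_zero hf hnc hK hKD hKf hαre hαim)
    (hasContinuousLogOn_of_im_ne_zero hf hnc hK hKD hKf hβre hβim)

/-- Removing simple zeros of `f` one at a time from the union of the complement of the zero set
of `Re f` with these zeros increases the number of path components each time. -/
lemma exists_finset_pairwise_not_joinedIn {f : ℂ → ℂ} (hf : AnalyticOnNhd ℂ f (ball 0 1))
    (hnc : ¬ ∃ c, ∀ z ∈ ball (0 : ℂ) 1, f z = c)
    (hne : ∃ z ∈ ball (0 : ℂ) 1, (f z).re ≠ 0) (G : Finset ℂ)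
    (hG : ∀ z ∈ G, z ∈ ball (0 : ℂ) 1 ∧ f z = 0 ∧ deriv f z ≠ 0) (F : Finset ℂ)
    (hF : ∀ z ∈ F, z ∈ ball (0 : ℂ) 1 ∧ f z = 0) (hFG : Disjoint F G) :
    ∃ P : Finset ℂ, (∀ z ∈ P, z ∈ ball (0 : ℂ) 1 ∧ (f z).re ≠ 0) ∧ G.card + 1 ≤ P.card ∧
      (P : Set ℂ).Pairwise fun x y =>
        ¬ JoinedIn ({z ∈ ball (0 : ℂ) 1 | (f z).re ≠ 0} ∪ (F : Set ℂ)) x y := by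
  classical
  induction G using Finset.induction_on generalizing F with
  | empty =>
    obtain ⟨z, hz, hz0⟩ := hne
    exact ⟨{z}, by simpa using ⟨by simpa using hz, hz0⟩, by simp, by simp⟩
  | insert z₁ G hzG ih =>
    obtain ⟨hz₁, h0, h1⟩ := hG z₁ (Finset.mem_insert_self _ _)
    have hzF : z₁ ∉ F := (Finset.disjoint_insert_right.1 hFG).1
    obtain ⟨P, hP, hcard, hpw⟩ := ih (fun z hz => hG z (Finset.mem_insert_of_mem hz)) (insert z₁ F)
      (fun z hz => (Finset.mem_insert.1 hz).elim (fun h => h ▸ ⟨hz₁, h0⟩) (hF z))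
      (Finset.disjoint_insert_left.2 ⟨hzG, (Finset.disjoint_insert_right.1 hFG).2⟩)
    obtain ⟨c₁, c₂, hc₁, hc₂, hj₁, hj₂, hnj⟩ := exists_not_joinedIn_of_simple_zero hf hnc hz₁ h0 h1
    set D : Set ℂ := {z ∈ ball (0 : ℂ) 1 | (f z).re ≠ 0} with hD
    set A : Set ℂ := D ∪ (insert z₁ F : Finset ℂ) with hA
    have hsub : D ∪ {z₁} ⊆ A := union_subset_union_right _ (by simp)
    have hsubF : D ∪ F ⊆ A := union_subset_union_right _ (by simp)
    replace hj₁ : JoinedIn A c₁ z₁ := hj₁.mono hsub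
    replace hj₂ : JoinedIn A c₂ z₁ := hj₂.mono hsub
    have hmem : ∀ c, JoinedIn A c z₁ → (f c).re ≠ 0 → c ∈ ball (0 : ℂ) 1 := fun c hc hc0 => by
      rcases hc.source_mem with h | h
      · exact h.1
      · rcases Finset.mem_insert.1 (Finset.mem_coe.1 h) with rfl | h
        · exact hz₁
        · exact (hF c h).1
    have hnj' : ¬ JoinedIn (D ∪ F) c₁ c₂ := fun h => hnj (h.mono (by
      rintro z (hz | hz)
      · exact ⟨⟨hz.1, fun h => absurd h hz.2⟩, fun h => hz.2 (by rw [mem_singleton_iff.1 h, h0]; rfl)⟩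
      · exact ⟨⟨(hF z hz).1, fun _ => (hF z hz).2⟩, fun h => hzF (h ▸ hz)⟩))
    set Q : Finset ℂ := P.filter fun z => ¬ JoinedIn A z z₁ with hQ
    have hQc : P.card ≤ Q.card + 1 := by
      rw [← Finset.card_filter_add_card_filter_not (s := P) (p := fun z => ¬ JoinedIn A z z₁)]
      refine Nat.add_le_add_left (Finset.card_le_one.2 fun a ha b hb => ?_) _
      simp only [Finset.mem_filter, not_not] at ha hb
      by_contra hab
      exact hpw ha.1 hb.1 hab (ha.2.trans hb.2.symm)
    have hcQ : ∀ c, JoinedIn A c z₁ → ∀ z ∈ Q, ¬ JoinedIn (D ∪ F) c z := fun c hc z hz h =>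
      (Finset.mem_filter.1 hz).2 ((h.mono hsubF).symm.trans hc)
    have hcQ' : ∀ c, JoinedIn A c z₁ → c ∉ Q := fun c hc h => (Finset.mem_filter.1 h).2 hc
    have hc12 : c₁ ≠ c₂ := by
      rintro rfl
      exact hnj' (JoinedIn.refl (Or.inl ⟨hmem c₁ hj₁ hc₁, hc₁⟩))
    refine ⟨insert c₁ (insert c₂ Q), ?_, ?_, ?_⟩
    · simp only [Finset.mem_insert]
      rintro z (rfl | rfl | hz)
      · exact ⟨hmem _ hj₁ hc₁, hc₁⟩
      · exact ⟨hmem _ hj₂ hc₂, hc₂⟩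
      · exact hP z (Finset.mem_filter.1 hz).1
    · have hc₁Q : c₁ ∉ insert c₂ Q := by simp [hc12, hcQ' c₁ hj₁]
      rw [Finset.card_insert_of_notMem hc₁Q,
        Finset.card_insert_of_notMem (hcQ' c₂ hj₂), Finset.card_insert_of_notMem hzG]
      omega
    · have : Std.Symm fun x y => ¬ JoinedIn (D ∪ (F : Set ℂ)) x y :=
        ⟨fun x y h h' => h h'.symm⟩
      rw [Finset.coe_insert, Finset.coe_insert, pairwise_insert_of_symm, pairwise_insert_of_symm]
      refine ⟨⟨fun a ha b hb hab h => ?_, fun b hb _ => hcQ c₂ hj₂ b hb⟩, ?_⟩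
      · exact hpw (Finset.mem_filter.1 ha).1 (Finset.mem_filter.1 hb).1 hab (h.mono hsubF)
      · rintro b (rfl | hb) _
        · exact hnj'
        · exact hcQ c₁ hj₁ b hb

lemma joinedIn_of_connectedComponentIn_eq {E : Type*} [TopologicalSpace E]
    [LocallyPathConnectedSpace E] {U : Set E} (hU : IsOpen U) {x y : E} (hx : x ∈ U) (hy : y ∈ U)
    (h : connectedComponentIn U x = connectedComponentIn U y) : JoinedIn U x y := by
  have hC : IsPathConnected (connectedComponentIn U x) :=
    (hU.connectedComponentIn.isConnected_iff_isPathConnected).1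
      (isConnected_connectedComponentIn_iff.2 hx)
  exact (hC.joinedIn x (mem_connectedComponentIn hx) y (h ▸ mem_connectedComponentIn hy)).mono
    (connectedComponentIn_subset _ _)

/-- The number of simple zeros of `f` is less than the number of components of the complement of
the zero set of `Re f`. -/
lemma card_lt_ncard_components {E : Type*} [NormedAddCommGroup E] [NormedSpace ℝ E]
    (T : ℂ ≃ₗᵢ[ℝ] E) {u : E → ℝ} {f : ℂ → ℂ} (hf : AnalyticOnNhd ℂ f (ball 0 1))
    (hu : ∀ z ∈ ball (0 : ℂ) 1, (f z).re = u (T z))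
    (hnc : ¬ ∃ c, ∀ z ∈ ball (0 : ℂ) 1, f z = c)
    (hne : ∃ z ∈ ball (0 : ℂ) 1, (f z).re ≠ 0) {U : Set E} (hU : U = {x ∈ ball (0 : E) 1 | u x ≠ 0})
    (hfin : {C | ∃ x ∈ U, C = connectedComponentIn U x}.Finite) (G : Finset ℂ)
    (hG : ∀ z ∈ G, z ∈ ball (0 : ℂ) 1 ∧ f z = 0 ∧ deriv f z ≠ 0) :
    G.card < {C | ∃ x ∈ U, C = connectedComponentIn U x}.ncard := by
  obtain ⟨P, hP, hcard, hpw⟩ := exists_finset_pairwise_not_joinedIn hf hnc hne G hG ∅ (by simp)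
    (Finset.disjoint_empty_left G)
  have hUeq : U = T.symm ⁻¹' {z ∈ ball (0 : ℂ) 1 | (f z).re ≠ 0} := by
    ext x
    rw [hU]
    simp only [mem_ofPred_eq, mem_preimage, mem_ball_zero_iff, LinearIsometryEquiv.norm_map]
    refine and_congr_right fun hx => ?_
    rw [hu _ (by simpa using hx), LinearIsometryEquiv.apply_symm_apply]
  have hopen : IsOpen U := by
    rw [hUeq]
    refine IsOpen.preimage T.symm.continuous ?_
    exact (Complex.continuous_re.comp_continuousOn hf.continuousOn).isOpen_inter_preimage
      isOpen_ball (isClosed_singleton (x := (0 : ℝ))).isOpen_compl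
  have hTU : ∀ z ∈ P, T z ∈ U := fun z hz => by
    rw [hUeq]
    simpa using hP z hz
  refine Nat.lt_of_succ_le (hcard.trans ?_)
  rw [← ncard_coe_finset P]
  refine ncard_le_ncard_of_injOn (fun z => connectedComponentIn U (T z))
    (fun z hz => ⟨T z, hTU z hz, rfl⟩) (fun x hx y hy hxy => ?_) hfin
  by_contra hne'
  refine hpw hx hy hne' ?_
  have h := (joinedIn_of_connectedComponentIn_eq hopen (hTU x hx) (hTU y hy) hxy).map
    T.symm.continuous
  rw [LinearIsometryEquiv.symm_apply_apply, LinearIsometryEquiv.symm_apply_apply, hUeq] at h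
  exact h.mono ((image_preimage_subset _ _).trans subset_union_left)

lemma exists_eq_prod_mul_of_simple_zeros {s : Finset ℂ} {g : ℂ → ℂ}
    (hg : AnalyticOnNhd ℂ g (ball 0 1)) (hs : ∀ a ∈ s, a ∈ ball (0 : ℂ) 1 ∧ g a = 0)
    (hzero : ∀ z ∈ ball (0 : ℂ) 1, g z = 0 → z ∈ s ∧ deriv g z ≠ 0) :
    ∃ G : ℂ → ℂ, AnalyticOnNhd ℂ G (ball 0 1) ∧ (∀ z ∈ ball (0 : ℂ) 1, G z ≠ 0) ∧
      ∀ z, g z = (∏ a ∈ s, (z - a)) * G z := by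
  classical
  induction s using Finset.induction_on generalizing g with
  | empty => exact ⟨g, hg, fun z hz h => by simpa using (hzero z hz h).1, by simp⟩
  | insert a s has ih =>
    obtain ⟨ha, ha0⟩ := hs a (Finset.mem_insert_self _ _)
    have hG : AnalyticOnNhd ℂ (dslope g a) (ball 0 1) :=
      ((Complex.differentiableOn_dslope (isOpen_ball.mem_nhds ha)).2
        hg.differentiableOn).analyticOnNhd isOpen_ball
    have hmul : ∀ z, g z = (z - a) * dslope g a z := fun z => by
      have := sub_smul_dslope g a z
      rw [ha0, sub_zero, smul_eq_mul] at this
      exact this.symm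
    suffices h : ∃ G : ℂ → ℂ, AnalyticOnNhd ℂ G (ball 0 1) ∧ (∀ z ∈ ball (0 : ℂ) 1, G z ≠ 0) ∧
        ∀ z, dslope g a z = (∏ a ∈ s, (z - a)) * G z by
      obtain ⟨G, hGa, hG0, hGmul⟩ := h
      refine ⟨G, hGa, hG0, fun z => ?_⟩
      rw [hmul, hGmul, Finset.prod_insert has, mul_assoc]
    refine ih hG (fun b hb => ?_) (fun z hz hz0 => ?_)
    · obtain ⟨hb1, hb0⟩ := hs b (Finset.mem_insert_of_mem hb)
      refine ⟨hb1, ?_⟩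
      rw [hmul] at hb0
      refine (mul_eq_zero.1 hb0).resolve_left (sub_ne_zero.2 ?_)
      rintro rfl
      exact has hb
    · obtain ⟨hzs, hd⟩ := hzero z hz (by rw [hmul, hz0, mul_zero])
      have hza : z ≠ a := by
        rintro rfl
        exact hd (by rw [← dslope_same, hz0])
      refine ⟨(Finset.mem_insert.1 hzs).resolve_left hza, fun h => hd ?_⟩
      have h1 : HasDerivAt (dslope g a) 0 z := h ▸ (hG z hz).differentiableAt.hasDerivAt
      have h2 := ((hasDerivAt_id z).sub_const a).mul h1
      rw [hz0] at h2
      have h3 : g = (fun z => z - a) * dslope g a := funext hmul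
      rw [h3]
      simpa using h2.deriv

/-- Harnack-type upper bound for a harmonic function, through its mean absolute value on a
circle. -/
lemma le_of_circleAverage_abs_le {U : ℂ → ℝ} {r R M : ℝ} (hrR : r < R)
    (hU : InnerProductSpace.HarmonicOnNhd U (closedBall 0 R))
    (hM : Real.circleAverage |U| 0 R ≤ M) {z : ℂ} (hz : ‖z‖ ≤ r) :
    U z ≤ (R + r) / (R - r) * M := by
  have hr : 0 ≤ r := (norm_nonneg z).trans hz
  have hR : 0 < R := hr.trans_lt hrR
  have hRr : 0 < R - r := sub_pos.2 hrR
  have hzR : z ∈ ball (0 : ℂ) R := mem_ball_zero_iff.2 (hz.trans_lt hrR)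
  have hcont : ContinuousOn U (sphere 0 |R|) := by
    rw [abs_of_pos hR]
    exact hU.continuousOn.mono sphere_subset_closedBall
  rw [← hU.circleAverage_poissonKernel_smul hzR]
  set c : ℝ := (R + r) / (R - r) with hc
  have hc0 : 0 ≤ c := by positivity
  have hsphere : ∀ w ∈ sphere (0 : ℂ) |R|, ‖w‖ = R := fun w hw => by
    rwa [mem_sphere_zero_iff_norm, abs_of_pos hR] at hw
  have hne : ∀ w ∈ sphere (0 : ℂ) |R|, R - r ≤ ‖w - z‖ := fun w hw => by
    have := norm_sub_norm_le w z
    rw [hsphere w hw] at this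
    linarith
  have hk : ∀ w ∈ sphere (0 : ℂ) |R|, 0 ≤ poissonKernel 0 z w ∧ poissonKernel 0 z w ≤ c :=
    fun w hw => by
    have h1 := norm_sub_norm_le w z
    have h2 : 0 < R - ‖z‖ := by linarith
    have h3 := norm_nonneg z
    rw [hsphere w hw] at h1
    rw [poissonKernel_def, sub_zero, sub_zero, hsphere w hw]
    have h4 : R ^ 2 - ‖z‖ ^ 2 = (R + ‖z‖) * (R - ‖z‖) := by ring
    rw [h4]
    refine ⟨by positivity, ?_⟩
    calc (R + ‖z‖) * (R - ‖z‖) / ‖w - z‖ ^ 2 ≤ (R + ‖z‖) * (R - ‖z‖) / (R - ‖z‖) ^ 2 := by gcongr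
      _ = (R + ‖z‖) / (R - ‖z‖) := by field_simp
      _ ≤ c := by rw [hc]; gcongr
  have hint : CircleIntegrable (c • |U|) 0 R :=
    (continuousOn_const.smul hcont.abs).circleIntegrable'
  have hint' : CircleIntegrable (poissonKernel 0 z • U) 0 R := by
    refine ContinuousOn.circleIntegrable' (ContinuousOn.smul ?_ hcont)
    simp only [sub_zero, funext (poissonKernel_def 0 z)]
    refine ContinuousOn.div (by fun_prop) (by fun_prop) fun w hw => ?_
    have := hne w hw
    have : 0 < ‖w - z‖ := by linarith
    positivity
  calc Real.circleAverage (poissonKernel 0 z • U) 0 R ≤ Real.circleAverage (c • |U|) 0 R := by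
        refine Real.circleAverage_mono hint' hint fun w hw => ?_
        simp only [Pi.smul_apply', Pi.smul_apply, smul_eq_mul, Pi.abs_apply]
        exact (mul_le_mul_of_nonneg_left (le_abs_self _) (hk w hw).1).trans
          (mul_le_mul_of_nonneg_right (hk w hw).2 (abs_nonneg _))
    _ = c * Real.circleAverage |U| 0 R := Real.circleAverage_smul
    _ ≤ c * M := by gcongr

lemma log_norm_eq_sum_add {s : Finset ℂ} {g G : ℂ → ℂ} {z : ℂ} (hG0 : G z ≠ 0) (hz : z ∉ s)
    (hmul : g z = (∏ a ∈ s, (z - a)) * G z) :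
    Real.log ‖g z‖ = (∑ a ∈ s, Real.log ‖z - a‖) + Real.log ‖G z‖ := by
  have hne : ∀ a ∈ s, ‖z - a‖ ≠ 0 := fun a ha => norm_ne_zero_iff.2 (sub_ne_zero.2 (by
    rintro rfl
    exact hz ha))
  rw [hmul, norm_mul, norm_prod, Real.log_mul (Finset.prod_ne_zero_iff.2 hne)
    (norm_ne_zero_iff.2 hG0), Real.log_prod hne]

/-- An analytic function with at most `N` simple zeros is bounded on compact sets in terms of its
bound on a smaller disc and of the mean of the negative part of `log ‖g‖` on a larger circle. -/
lemma norm_le_of_circleAverage_log_norm_le {s : Finset ℂ} {g : ℂ → ℂ} {N : ℕ} (hsN : s.card ≤ N)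
    (hg : AnalyticOnNhd ℂ g (ball 0 1)) (hs : ∀ a ∈ s, a ∈ ball (0 : ℂ) 1 ∧ g a = 0)
    (hzero : ∀ z ∈ ball (0 : ℂ) 1, g z = 0 → z ∈ s ∧ deriv g z ≠ 0)
    (hbd : ∀ z ∈ closedBall (0 : ℂ) (1 / 2), ‖g z‖ ≤ 2) {r R K : ℝ} (hr : 0 ≤ r) (hrR : r < R)
    (hR1 : R < 1)
    (hK : Real.circleAverage (fun z => |Real.log ‖g z‖| - Real.log ‖g z‖) 0 R ≤ K) {z : ℂ}
    (hz : ‖z‖ ≤ r) :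
    ‖g z‖ ≤ 2 ^ N * Real.exp ((R + r) / (R - r) * (Real.log 2 + 3 * (N * Real.log 2) + K)) := by
  obtain ⟨G, hGa, hG0, hmul⟩ := exists_eq_prod_mul_of_simple_zeros hg hs hzero
  have hR : 0 < R := hr.trans_lt hrR
  have hl2 : 0 < Real.log 2 := Real.log_pos (by norm_num)
  set U : ℂ → ℝ := fun z => Real.log ‖G z‖ with hUdef
  have hU : InnerProductSpace.HarmonicOnNhd U (ball 0 1) := fun z hz =>
    (hGa z hz).harmonicAt_log_norm (hG0 z hz)
  set h : ℂ → ℝ := fun z => (∑ a ∈ s, Real.log ‖z - a‖) + U z with hhdef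
  have hsub : ∀ ρ : ℝ, 0 < ρ → ρ < 1 → closedBall (0 : ℂ) |ρ| ⊆ ball 0 1 := fun ρ hρ hρ1 => by
    rw [abs_of_pos hρ]
    exact closedBall_subset_ball hρ1
  have hgh : ∀ ρ : ℝ, 0 < ρ → ρ < 1 → ∀ᶠ z in codiscreteWithin (sphere (0 : ℂ) |ρ|),
      Real.log ‖g z‖ = h z := fun ρ hρ hρ1 => by
    filter_upwards [self_mem_codiscreteWithin (sphere (0 : ℂ) |ρ|),
      codiscreteWithin_mono (subset_univ _) s.finite_toSet.compl_mem_codiscrete] with z hz hzs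
    exact log_norm_eq_sum_add (hG0 z (hsub ρ hρ hρ1 (sphere_subset_closedBall hz))) hzs (hmul z)
  have hUint : ∀ ρ : ℝ, 0 < ρ → ρ < 1 → CircleIntegrable U 0 ρ := fun ρ hρ hρ1 =>
    ((hU.mono (hsub ρ hρ hρ1)).continuousOn.mono sphere_subset_closedBall).circleIntegrable'
  have hsint : ∀ ρ : ℝ, CircleIntegrable (fun z => ∑ a ∈ s, Real.log ‖z - a‖) 0 ρ := fun ρ => by
    have := CircleIntegrable.sum s (c := 0) (R := ρ) (f := fun a z => Real.log ‖z - a‖)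
      fun a _ => circleIntegrable_log_norm_sub_const ρ
    convert! this using 1
    ext z
    simp
  have hhint : ∀ ρ : ℝ, 0 < ρ → ρ < 1 → CircleIntegrable h 0 ρ := fun ρ hρ hρ1 =>
    (hsint ρ).add (hUint ρ hρ hρ1)
  have hUavg : ∀ ρ : ℝ, 0 < ρ → ρ < 1 → Real.circleAverage U 0 ρ = U 0 := fun ρ hρ hρ1 =>
    (hU.mono (hsub ρ hρ hρ1)).circleAverage_eq
  have hU0 : U 0 ≤ Real.log 2 + N * Real.log 2 := by
    have h1 : Real.circleAverage h 0 (1 / 2) ≤ Real.log 2 := by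
      rw [← Real.circleAverage_congr_codiscreteWithin (hgh (1 / 2) (by norm_num) (by norm_num))
        (by norm_num)]
      refine Real.circleAverage_mono_on_of_le_circle
        ((hhint (1 / 2) (by norm_num) (by norm_num)).congr_codiscreteWithin ?_) fun z hz => ?_
      · exact (hgh (1 / 2) (by norm_num) (by norm_num)).mono fun z hz => hz.symm
      · rw [abs_of_pos (by norm_num)] at hz
        rcases (norm_nonneg (g z)).eq_or_lt with h0 | h0
        · rw [← h0, Real.log_zero]
          exact hl2.le
        · exact Real.log_le_log h0 (hbd z (sphere_subset_closedBall hz))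
    have h2 : Real.circleAverage h 0 (1 / 2) =
        (∑ a ∈ s, Real.circleAverage (fun z => Real.log ‖z - a‖) 0 (1 / 2)) + U 0 := by
      rw [hhdef, Real.circleAverage_fun_add (hsint _) (hUint _ (by norm_num) (by norm_num)),
        hUavg _ (by norm_num) (by norm_num), Real.circleAverage_fun_sum]
      exact fun a _ => circleIntegrable_log_norm_sub_const _
    have h3 : ∀ a ∈ s, -Real.log 2 ≤ Real.circleAverage (fun z => Real.log ‖z - a‖) 0 (1 / 2) :=
      fun a _ => by
      rw [circleAverage_log_norm_sub_const_eq_log_radius_add_posLog (by norm_num), one_div,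
        Real.log_inv]
      linarith [Real.posLog_nonneg (x := (2 : ℝ)⁻¹⁻¹ * ‖0 - a‖)]
    have h4 := Finset.card_nsmul_le_sum s _ _ h3
    have h5 : (s.card : ℝ) * Real.log 2 ≤ N * Real.log 2 := by gcongr
    rw [nsmul_eq_mul] at h4
    linarith
  have hlog : ∀ z ∈ ball (0 : ℂ) 1, ∑ a ∈ s, Real.log ‖z - a‖ ≤ N * Real.log 2 := fun z hz => by
    have h1 : ∀ a ∈ s, Real.log ‖z - a‖ ≤ Real.log 2 := fun a ha => by
      rcases (norm_nonneg (z - a)).eq_or_lt with h0 | h0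
      · rw [← h0, Real.log_zero]
        exact hl2.le
      · refine Real.log_le_log h0 ?_
        have := norm_sub_le z a
        have := mem_ball_zero_iff.1 hz
        have := mem_ball_zero_iff.1 (hs a ha).1
        linarith
    have h2 := Finset.sum_le_card_nsmul s _ _ h1
    have h3 : (s.card : ℝ) * Real.log 2 ≤ N * Real.log 2 := by gcongr
    rw [nsmul_eq_mul] at h2
    linarith
  have hUabs : Real.circleAverage |U| 0 R ≤ Real.log 2 + 3 * (N * Real.log 2) + K := by
    have hint : CircleIntegrable (fun z => |h z| - h z) 0 R :=
      CircleIntegrable.sub (f := fun z => |h z|) (hhint R hR hR1).abs (hhint R hR hR1)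
    have h1 : Real.circleAverage (fun z => |h z| - h z) 0 R ≤ K := by
      rw [← Real.circleAverage_congr_codiscreteWithin (f₁ := fun z => |Real.log ‖g z‖| - Real.log ‖g z‖)
        ((hgh R hR hR1).mono fun z hz => by simp only [hz]) hR.ne']
      exact hK
    have hint2 : CircleIntegrable (fun z => U z + 2 * (N * Real.log 2)) 0 R :=
      (hUint R hR hR1).add (circleIntegrable_const _ _ _)
    calc Real.circleAverage |U| 0 R
        ≤ Real.circleAverage (fun z => U z + 2 * (N * Real.log 2) + (|h z| - h z)) 0 R := by
          refine Real.circleAverage_mono (hUint R hR hR1).abs (hint2.add hint) fun z hz => ?_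
          have h2 := hlog z (hsub R hR hR1 (sphere_subset_closedBall hz))
          have h3 := neg_abs_le (h z)
          have h4 := le_abs_self (h z)
          have h5 : h z = (∑ a ∈ s, Real.log ‖z - a‖) + U z := rfl
          have h6 : 0 ≤ N * Real.log 2 := by positivity
          rw [Pi.abs_apply, abs_le]
          constructor <;> linarith
      _ = U 0 + 2 * (N * Real.log 2) + Real.circleAverage (fun z => |h z| - h z) 0 R := by
          rw [Real.circleAverage_fun_add hint2 hint, Real.circleAverage_fun_add (hUint R hR hR1)
            (circleIntegrable_const _ _ _), hUavg R hR hR1, Real.circleAverage_const]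
      _ ≤ _ := by linarith
  have hzb : z ∈ ball (0 : ℂ) 1 := mem_ball_zero_iff.2 (hz.trans_lt (hrR.trans hR1))
  have hUz := le_of_circleAverage_abs_le hrR (hU.mono (closedBall_subset_ball hR1)) hUabs hz
  rw [hmul, norm_mul, norm_prod]
  have hprod : ∏ a ∈ s, ‖z - a‖ ≤ 2 ^ N := by
    calc ∏ a ∈ s, ‖z - a‖ ≤ ∏ a ∈ s, (2 : ℝ) := by
          refine Finset.prod_le_prod (fun _ _ => norm_nonneg _) fun a ha => ?_
          have := norm_sub_le z a
          have := mem_ball_zero_iff.1 hzb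
          have := mem_ball_zero_iff.1 (hs a ha).1
          linarith
      _ = 2 ^ s.card := by simp
      _ ≤ 2 ^ N := by gcongr; norm_num
  have hexp : ‖G z‖ ≤ Real.exp ((R + r) / (R - r) * (Real.log 2 + 3 * (N * Real.log 2) + K)) := by
    rw [← Real.exp_log (norm_pos_iff.2 (hG0 z hzb))]
    exact Real.exp_le_exp.2 hUz
  gcongr

lemma lintegral_abs_log_sub_log_lt_top :
    ∫⁻ t : ℝ, ENNReal.ofReal (|Real.log t| - Real.log t) < ⊤ := by
  have hint : IntegrableOn (fun t => |Real.log t| - Real.log t) (Ioc (-1) 1) := by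
    rw [← intervalIntegrable_iff_integrableOn_Ioc_of_le (by norm_num)]
    exact (intervalIntegral.intervalIntegrable_log').abs.sub intervalIntegral.intervalIntegrable_log'
  refine lt_of_le_of_lt ?_ hint.lintegral_lt_top
  rw [← lintegral_indicator measurableSet_Ioc]
  refine lintegral_mono fun t => ?_
  by_cases ht : t ∈ Ioc (-1 : ℝ) 1
  · rw [indicator_of_mem ht]
  · rw [indicator_of_notMem ht, ← Real.log_abs, abs_of_nonneg (Real.log_nonneg ?_), sub_self]
    · simp
    · rw [le_abs]
      rw [mem_Ioc, not_and_or, not_lt, not_le] at ht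
      rcases ht with h | h
      · right; linarith
      · left; linarith

lemma abs_log_norm_sub_le {w : ℂ} {y : ℝ} (h : w.im ≠ y) :
    |Real.log ‖w - y * Complex.I‖| - Real.log ‖w - y * Complex.I‖ ≤
      |Real.log (w.im - y)| - Real.log (w.im - y) := by
  have h1 : |w.im - y| ≤ ‖w - y * Complex.I‖ := by
    simpa using Complex.abs_im_le_norm (w - y * Complex.I)
  have h2 := Real.log_le_log (abs_pos.2 (sub_ne_zero.2 h)) h1
  rw [Real.log_abs] at h2
  rcases abs_cases (Real.log ‖w - y * Complex.I‖) with h3 | h3 <;>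
    rcases abs_cases (Real.log (w.im - y)) with h4 | h4 <;> linarith

/-- Among the translates of `f` by small imaginary constants, avoiding a countable set of them,
there is one for which the negative part of the logarithm of the norm has small mean. -/
lemma exists_circleAverage_abs_log_sub_log_le : ∃ K : ℝ, ∀ (f : ℂ → ℂ) (R : ℝ) (S : Set ℝ),
    ContinuousOn f (sphere 0 |R|) → S.Countable → ∃ y ∈ Icc (0 : ℝ) 1, y ∉ S ∧
      Real.circleAverage (fun z => |Real.log ‖f z - y * Complex.I‖| -
        Real.log ‖f z - y * Complex.I‖) 0 R ≤ K := by
  set K₀ := ∫⁻ t : ℝ, ENNReal.ofReal (|Real.log t| - Real.log t) with hK₀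
  refine ⟨K₀.toReal, fun f R S hf hS => ?_⟩
  set w : ℝ → ℂ := fun θ => f (circleMap 0 R θ) with hw
  have hwc : Continuous w :=
    hf.comp_continuous (continuous_circleMap 0 R) (circleMap_mem_sphere' 0 R)
  set F : ℝ → ℝ → ENNReal := fun y θ => ENNReal.ofReal
    (|Real.log ‖w θ - y * Complex.I‖| - Real.log ‖w θ - y * Complex.I‖) with hF
  have hFm : Measurable (Function.uncurry F) := by
    have h1 : Measurable fun p : ℝ × ℝ => Real.log ‖w p.2 - p.1 * Complex.I‖ :=
      Real.measurable_log.comp (by fun_prop : Continuous _).measurable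
    exact (h1.abs.sub h1).ennreal_ofReal
  have hinner : ∀ θ, ∫⁻ y in Icc (0 : ℝ) 1, F y θ ≤ K₀ := fun θ => by
    refine (setLIntegral_le_lintegral _ _).trans ?_
    rw [hK₀, ← lintegral_sub_left_eq_self
      (fun t : ℝ => ENNReal.ofReal (|Real.log t| - Real.log t)) (w θ).im]
    refine lintegral_mono_ae ?_
    have : ∀ᵐ y : ℝ, y ≠ (w θ).im := by simp [ae_iff, measure_singleton]
    filter_upwards [this] with y hy
    exact ENNReal.ofReal_le_ofReal (abs_log_norm_sub_le hy.symm)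
  have houter : ∫⁻ y in Icc (0 : ℝ) 1, ∫⁻ θ in Ioc 0 (2 * Real.pi), F y θ ≤
      ENNReal.ofReal (2 * Real.pi) * K₀ := by
    rw [lintegral_lintegral_swap hFm.aemeasurable]
    refine (lintegral_mono fun θ => hinner θ).trans_eq ?_
    rw [lintegral_const, Measure.restrict_apply_univ, Real.volume_Ioc, sub_zero, mul_comm]
  have hprob : IsProbabilityMeasure (volume.restrict (Icc (0 : ℝ) 1)) := ⟨by simp⟩
  have hnull : volume.restrict (Icc (0 : ℝ) 1) (S ∪ (Icc (0 : ℝ) 1)ᶜ) = 0 := by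
    refine measure_union_null (Measure.absolutelyContinuous_of_le Measure.restrict_le_self
      (hS.measure_zero volume)) ?_
    rw [Measure.restrict_apply measurableSet_Icc.compl, compl_inter_self, measure_empty]
  obtain ⟨y, hyS, hy⟩ := exists_notMem_null_le_lintegral
    (μ := volume.restrict (Icc (0 : ℝ) 1)) (f := fun y => ∫⁻ θ in Ioc 0 (2 * Real.pi), F y θ)
    (hFm.lintegral_prod_right').aemeasurable hnull
  rw [mem_union, not_or, mem_compl_iff, not_not] at hyS
  refine ⟨y, hyS.2, hyS.1, ?_⟩
  have h2π := Real.two_pi_pos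
  rw [Real.circleAverage_def, intervalIntegral.integral_of_le h2π.le, integral_eq_lintegral_of_nonneg_ae
    (Eventually.of_forall fun θ => sub_nonneg.2 (le_abs_self _)) ?_, smul_eq_mul,
    inv_mul_le_iff₀ h2π]
  · have := ENNReal.toReal_mono
      (ENNReal.mul_ne_top ENNReal.ofReal_ne_top lintegral_abs_log_sub_log_lt_top.ne)
      (hy.trans houter)
    rwa [ENNReal.toReal_mul, ENNReal.toReal_ofReal h2π.le] at this
  · have h1 : Measurable fun θ : ℝ => Real.log ‖w θ - y * Complex.I‖ :=
      Real.measurable_log.comp (by fun_prop : Continuous _).measurable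
    exact (h1.abs.sub h1).aestronglyMeasurable

lemma countable_zeros {g : ℂ → ℂ} (hg : AnalyticOnNhd ℂ g (ball 0 1))
    (hne : ¬ EqOn g 0 (ball 0 1)) : {z ∈ ball (0 : ℂ) 1 | g z = 0}.Countable := by
  have h := (hg.eqOn_zero_or_eventually_ne_zero_of_preconnected
    (convex_ball _ _).isPreconnected).resolve_left hne
  have h' : {z : ℂ | g z = 0}ᶜ ∈ codiscreteWithin (ball (0 : ℂ) 1) := h
  have hd : DiscreteTopology ({z : ℂ | g z = 0} ∩ ball (0 : ℂ) 1 : Set ℂ) :=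
    isDiscrete_iff_discreteTopology.mp (isDiscrete_of_codiscreteWithin h')
  have hc : ({z : ℂ | g z = 0} ∩ ball (0 : ℂ) 1).Countable :=
    TopologicalSpace.separableSpace_iff_countable.1 inferInstance
  exact hc.mono fun z hz => And.symm hz

lemma exists_forall_eq_of_deriv_eq_zero {f : ℂ → ℂ} (hf : AnalyticOnNhd ℂ f (ball 0 1))
    (h : EqOn (deriv f) 0 (ball 0 1)) : ∃ c, ∀ z ∈ ball (0 : ℂ) 1, f z = c :=
  isOpen_ball.exists_is_const_of_deriv_eq_zero (convex_ball _ _).isPreconnected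
    hf.differentiableOn h

/-- An analytic function on the unit disc all of whose imaginary translates have at most `N` simple
zeros is bounded on compact sets in terms of its bound on a smaller disc. -/
lemma exists_norm_le_of_card_simple_zeros_le (N : ℕ) {r : ℝ} (hr1 : r < 1) :
    ∃ C : ℝ, ∀ f : ℂ → ℂ, AnalyticOnNhd ℂ f (ball 0 1) →
      (∀ z ∈ closedBall (0 : ℂ) (1 / 2), ‖f z‖ ≤ 1) →
      (¬ (∃ c, ∀ z ∈ ball (0 : ℂ) 1, f z = c) → ∀ (y : ℝ) (G : Finset ℂ),
        (∀ z ∈ G, z ∈ ball (0 : ℂ) 1 ∧ f z = y * Complex.I ∧ deriv f z ≠ 0) → G.card ≤ N) →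
      ∀ z ∈ closedBall (0 : ℂ) r, ‖f z‖ ≤ C := by
  obtain ⟨K, hK⟩ := exists_circleAverage_abs_log_sub_log_le
  obtain hr0 | hr0 := lt_or_ge r 0
  · exact ⟨0, fun f _ _ _ z hz => by simp [closedBall_eq_empty.2 hr0] at hz⟩
  set R : ℝ := (1 + r) / 2 with hR
  have hrR : r < R := by rw [hR]; linarith
  have hR1 : R < 1 := by rw [hR]; linarith
  set B : ℝ := 2 ^ N * Real.exp ((R + r) / (R - r) * (Real.log 2 + 3 * (N * Real.log 2) + K))
  have hB : 0 ≤ B := by positivity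
  refine ⟨B + 1, fun f hf hf1 hcard z hz => ?_⟩
  by_cases hconst : ∃ c, ∀ z ∈ ball (0 : ℂ) 1, f z = c
  · obtain ⟨c, hc⟩ := hconst
    rw [hc z (closedBall_subset_ball hr1 hz), ← hc 0 (by simp)]
    linarith [hf1 0 (by simp)]
  specialize hcard hconst
  have hS := (countable_zeros hf.deriv
    fun h => hconst (exists_forall_eq_of_deriv_eq_zero hf h)).image fun z => (f z).im
  have hsub : sphere (0 : ℂ) |R| ⊆ ball 0 1 := by
    rw [abs_of_nonneg (hr0.trans hrR.le)]
    exact sphere_subset_closedBall.trans (closedBall_subset_ball hR1)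
  obtain ⟨y, hy, hyS, hyK⟩ := hK f R _ (hf.continuousOn.mono hsub) hS
  set g : ℂ → ℂ := fun z => f z - y * Complex.I with hg
  have hgd : ∀ z, deriv g z = deriv f z := fun z => by simp [hg]
  have hga : AnalyticOnNhd ℂ g (ball 0 1) := hf.sub analyticOnNhd_const
  have hyI : ‖(y : ℂ) * Complex.I‖ ≤ 1 := by
    simpa [abs_of_nonneg hy.1] using hy.2
  have hsimple : ∀ z ∈ ball (0 : ℂ) 1, g z = 0 → deriv f z ≠ 0 := fun z hz h0 hd =>
    hyS ⟨z, ⟨hz, hd⟩, by simp [sub_eq_zero.1 h0]⟩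
  have hG : ∀ G : Finset ℂ, ↑G ⊆ {z ∈ ball (0 : ℂ) 1 | g z = 0} → G.card ≤ N := fun G hG =>
    hcard y G fun z hz => ⟨(hG hz).1, sub_eq_zero.1 (hG hz).2, hsimple z (hG hz).1 (hG hz).2⟩
  have hfin : {z ∈ ball (0 : ℂ) 1 | g z = 0}.Finite := by
    by_contra hinf
    obtain ⟨G, hGs, hGc⟩ := Set.Infinite.exists_subset_card_eq hinf (N + 1)
    have := hG G hGs
    omega
  have hle := norm_le_of_circleAverage_log_norm_le (s := hfin.toFinset) (g := g) (N := N)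
    (hG _ (by simp)) hga (fun a ha => by simpa using ha)
    (fun z hz h0 => ⟨by simpa [h0] using hz, by rw [hgd]; exact hsimple z hz h0⟩)
    (fun z hz => (norm_sub_le _ _).trans (by linarith [hf1 z hz])) hr0 hrR hR1 hyK
    (mem_closedBall_zero_iff.1 hz)
  calc ‖f z‖ = ‖g z + y * Complex.I‖ := by simp [hg]
    _ ≤ B + 1 := (norm_add_le _ _).trans (add_le_add hle hyI)

lemma dist_le_of_norm_le {f : ℂ → ℂ} (hf : DifferentiableOn ℂ f (ball 0 1)) {r R C : ℝ}
    (hrR : r < R) (hR : R < 1) (hC : ∀ z ∈ closedBall (0 : ℂ) R, ‖f z‖ ≤ C) :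
    ∀ z ∈ closedBall (0 : ℂ) r, ∀ w ∈ closedBall (0 : ℂ) r,
      dist (f z) (f w) ≤ C / (R - r) * dist z w := by
  have hsub : ∀ z ∈ closedBall (0 : ℂ) r, closedBall z (R - r) ⊆ closedBall 0 R := fun z hz =>
    closedBall_subset_closedBall' (by linarith [mem_closedBall.1 hz])
  have hd : ∀ z ∈ closedBall (0 : ℂ) r, DifferentiableAt ℂ f z := fun z hz =>
    hf.differentiableAt (isOpen_ball.mem_nhds
      (closedBall_subset_ball (hrR.trans hR) hz))
  have hderiv : ∀ z ∈ closedBall (0 : ℂ) r, ‖deriv f z‖ ≤ C / (R - r) := fun z hz => by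
    refine Complex.norm_deriv_le_of_forall_mem_sphere_norm_le (sub_pos.2 hrR) ?_
      fun w hw => hC w (hsub z hz (sphere_subset_closedBall hw))
    exact (hf.mono ((hsub z hz).trans (closedBall_subset_ball hR))).diffContOnCl_ball subset_rfl
  intro z hz w hw
  rw [dist_eq_norm, dist_eq_norm]
  exact (convex_closedBall 0 r).norm_image_sub_le_of_norm_deriv_le hd hderiv hw hz

/-- **Montel's theorem** on the unit disc. -/
lemma exists_subseq_tendstoLocallyUniformlyOn {F : ℕ → ℂ → ℂ}
    (hF : ∀ n, DifferentiableOn ℂ (F n) (ball 0 1))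
    (hb : ∀ r < 1, ∃ C, ∀ n, ∀ z ∈ closedBall (0 : ℂ) r, ‖F n z‖ ≤ C) :
    ∃ φ : ℕ → ℕ, StrictMono φ ∧ ∃ f : ℂ → ℂ,
      TendstoLocallyUniformlyOn (fun n => F (φ n)) f atTop (ball 0 1) := by
  have key : ∀ r : ℝ, ∃ C D : ℝ, r < 1 →
      (∀ n, ∀ z ∈ closedBall (0 : ℂ) r, ‖F n z‖ ≤ C) ∧ ∀ n, ∀ z ∈ closedBall (0 : ℂ) r,
        ∀ w ∈ closedBall (0 : ℂ) r, dist (F n z) (F n w) ≤ D * dist z w := fun r => by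
    by_cases hr : r < 1
    · obtain ⟨C, hC⟩ := hb r hr
      obtain ⟨C', hC'⟩ := hb ((1 + r) / 2) (by linarith)
      exact ⟨C, _, fun _ => ⟨hC, fun n =>
        dist_le_of_norm_le (hF n) (by linarith) (by linarith) (hC' n)⟩⟩
    · exact ⟨0, 0, fun h => absurd h hr⟩
  choose C D hCD using key
  set P : (ball (0 : ℂ) 1 → ℂ) → Prop := fun g => ∀ z : ball (0 : ℂ) 1, ‖g z‖ ≤ C ‖(z : ℂ)‖ ∧
    ∀ r < 1, ∀ w : ball (0 : ℂ) 1, (z : ℂ) ∈ closedBall (0 : ℂ) r → (w : ℂ) ∈ closedBall (0 : ℂ) r →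
      dist (g z) (g w) ≤ D r * dist z w with hP
  have hloc : ∀ z : ball (0 : ℂ) 1, ∃ r < 1,
      ∀ᶠ w : ball (0 : ℂ) 1 in 𝓝 z, (w : ℂ) ∈ closedBall (0 : ℂ) r := fun z => by
    have hz := mem_ball_zero_iff.1 z.2
    refine ⟨(1 + ‖(z : ℂ)‖) / 2, by linarith, ?_⟩
    have : ∀ᶠ w in 𝓝 (z : ℂ), w ∈ ball (0 : ℂ) ((1 + ‖(z : ℂ)‖) / 2) :=
      isOpen_ball.mem_nhds (by rw [mem_ball_zero_iff]; linarith)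
    filter_upwards [continuous_subtype_val.continuousAt.eventually this] with w hw
    exact ball_subset_closedBall hw
  have hequi : ∀ z : ball (0 : ℂ) 1, ∀ ε > 0, ∀ᶠ w in 𝓝 z, ∀ g, P g → dist (g z) (g w) < ε :=
      fun z ε hε => by
    obtain ⟨r, hr, hev⟩ := hloc z
    have hlim : Tendsto (fun w : ball (0 : ℂ) 1 => D r * dist z w) (𝓝 z) (𝓝 0) := by
      have : Continuous fun w : ball (0 : ℂ) 1 => D r * dist z w := by fun_prop
      simpa using this.tendsto z
    filter_upwards [hev, hlim.eventually (gt_mem_nhds hε)] with w hw hlt g hg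
    exact ((hg z).2 r hr w hev.self_of_nhds hw).trans_lt hlt
  have hcont : ∀ g, P g → Continuous g := fun g hg => continuous_iff_continuousAt.2 fun z =>
    Metric.tendsto_nhds.2 fun ε hε => (hequi z ε hε).mono fun w hw => by
      rw [dist_comm]; exact hw g hg
  set S : Set C(ball (0 : ℂ) 1, ℂ) := {g | P g} with hS
  have hS1 : IsCompact (ContinuousMap.toFun '' S) := by
    have himage : ContinuousMap.toFun '' S = {g | P g} := by
      ext g
      constructor
      · rintro ⟨g, hg, rfl⟩
        exact hg
      · exact fun hg => ⟨⟨g, hcont g hg⟩, hg, rfl⟩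
    rw [himage]
    have hcpt : IsCompact (Set.univ.pi fun z : ball (0 : ℂ) 1 => closedBall (0 : ℂ) (C ‖(z : ℂ)‖)) :=
      isCompact_univ_pi fun z => isCompact_closedBall _ _
    refine hcpt.of_isClosed_subset ?_ fun g hg z _ => mem_closedBall_zero_iff.2 (hg z).1
    have : {g | P g} = ⋂ z : ball (0 : ℂ) 1, {g | ‖g z‖ ≤ C ‖(z : ℂ)‖} ∩
        ⋂ (r : ℝ) (_ : r < 1) (w : ball (0 : ℂ) 1) (_ : (z : ℂ) ∈ closedBall (0 : ℂ) r)
          (_ : (w : ℂ) ∈ closedBall (0 : ℂ) r), {g | dist (g z) (g w) ≤ D r * dist z w} := by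
      ext g
      simp only [hP, mem_ofPred_eq, mem_iInter, mem_inter_iff]
    rw [this]
    refine isClosed_iInter fun z => (isClosed_le (by fun_prop) continuous_const).inter ?_
    exact isClosed_iInter fun r => isClosed_iInter fun _ => isClosed_iInter fun w =>
      isClosed_iInter fun _ => isClosed_iInter fun _ => isClosed_le (by fun_prop) continuous_const
  have hS2 : Equicontinuous ((↑) : S → ball (0 : ℂ) 1 → ℂ) := fun z =>
    Metric.equicontinuousAt_iff_right.2 fun ε hε =>
      (hequi z ε hε).mono fun w hw g => hw g g.2
  have := (isOpen_ball (x := (0 : ℂ)) (ε := 1)).locallyCompactSpace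
  have hScpt := (ArzelaAscoli.isCompact_of_equicontinuous S hS1 hS2).isSeqCompact
  have hFP : ∀ n, P fun z => F n z := fun n z =>
    ⟨(hCD _ (mem_ball_zero_iff.1 z.2)).1 n z (by simp),
      fun r hr w hz hw => (hCD r hr).2 n z hz w hw⟩
  obtain ⟨f, -, φ, hφ, hlim⟩ := hScpt (x := fun n => ⟨_, hcont _ (hFP n)⟩) hFP
  refine ⟨φ, hφ, Function.extend Subtype.val f 0, ?_⟩
  rw [tendstoLocallyUniformlyOn_iff_tendstoLocallyUniformly_comp_coe,
    Function.extend_comp Subtype.val_injective]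
  rwa [ContinuousMap.tendsto_iff_tendstoLocallyUniformly] at hlim

end

section

open Topology InnerProductSpace Laplacian

lemma laplacian_comp_linearIsometryEquiv {n : ℕ} {E : Type*} [NormedAddCommGroup E]
    [InnerProductSpace ℝ E] [FiniteDimensional ℝ E] (T : E ≃ₗᵢ[ℝ] En n) (u : En n → ℝ) (z : E) :
    Δ (u ∘ T) z = laplacianAt u (T z) := by
  have h2 : iteratedFDeriv ℝ 2 (u ∘ T) z =
      (iteratedFDeriv ℝ 2 u (T z)).compContinuousLinearMap
        fun _ => (T.toContinuousLinearEquiv : E →L[ℝ] En n) := by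
    have h := T.toContinuousLinearEquiv.iteratedFDerivWithin_comp_right u uniqueDiffOn_univ
      (mem_univ (T z)) 2
    rwa [preimage_univ, iteratedFDerivWithin_univ, iteratedFDerivWithin_univ] at h
  rw [laplacian_eq_iteratedFDeriv_orthonormalBasis _
    ((EuclideanSpace.basisFun (Fin n) ℝ).map T.symm), laplacianAt]
  refine Finset.sum_congr rfl fun i _ => ?_
  rw [h2, ContinuousMultilinearMap.compContinuousLinearMap_apply]
  congr 1
  ext j : 1
  fin_cases j <;> simp

lemma HarmonicOnSet.harmonicOnNhd_comp {n : ℕ} {E : Type*} [NormedAddCommGroup E]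
    [InnerProductSpace ℝ E] [FiniteDimensional ℝ E] (T : E ≃ₗᵢ[ℝ] En n) {u : En n → ℝ}
    {Ω : Set (En n)} (hΩ : IsOpen Ω) (hu : HarmonicOnSet u Ω) :
    HarmonicOnNhd (u ∘ T) (T ⁻¹' Ω) := fun z hz => by
  have hn := hΩ.mem_nhds (show T z ∈ Ω from hz)
  refine ⟨(hu.1.contDiffAt hn).comp z T.contDiff.contDiffAt, ?_⟩
  filter_upwards [T.continuous.continuousAt.preimage_mem_nhds hn] with x hx
  rw [laplacian_comp_linearIsometryEquiv, hu.2 _ hx, Pi.zero_apply]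

lemma harmonicOnSet_comp_symm {n : ℕ} {E : Type*} [NormedAddCommGroup E]
    [InnerProductSpace ℝ E] [FiniteDimensional ℝ E] (T : E ≃ₗᵢ[ℝ] En n) {h : E → ℝ}
    {Ω : Set E} (hh : HarmonicOnNhd h Ω) : HarmonicOnSet (h ∘ T.symm) (T.symm ⁻¹' Ω) := by
  refine ⟨fun x hx => ((hh _ hx).1.comp x T.symm.contDiff.contDiffAt).contDiffWithinAt,
    fun x hx => ?_⟩
  have := laplacian_comp_linearIsometryEquiv T (h ∘ T.symm) (T.symm x)
  rw [T.apply_symm_apply] at this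
  rw [← this, Function.comp_assoc, T.symm_comp_self, Function.comp_id]
  exact (hh _ hx).2.self_of_nhds

lemma eqOn_zero_of_re_eqOn_zero {f : ℂ → ℂ} (hf : AnalyticOnNhd ℂ f (ball 0 1))
    (hre : ∀ z ∈ ball (0 : ℂ) 1, (f z).re = 0) (him : (f 0).im = 0) :
    ∀ z ∈ ball (0 : ℂ) 1, f z = 0 := by
  obtain ⟨c, hc⟩ := hf.eq_const_of_re_eq_const hre isOpen_ball
    ⟨⟨0, by simp⟩, (convex_ball (0 : ℂ) 1).isPreconnected⟩
  have h0 : f 0 = 0 := Complex.ext (hre 0 (by simp)) him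
  intro z hz
  rw [hc z hz, ← hc 0 (by simp), h0]

/-- A harmonic function with finitely many nodal domains is, up to scaling, the real part of a
normalised analytic function whose imaginary translates have few simple zeros. -/
lemma exists_normalized_analytic (T : ℂ ≃ₗᵢ[ℝ] En 2) {N : ℕ} {u : En 2 → ℝ}
    (hu : HarmonicOnSet u (ball 0 1)) (hne : ∃ x ∈ ball (0 : En 2) 1, u x ≠ 0)
    (hfin : (nodalComponents u (ball 0 1)).Finite)
    (hcount : (nodalComponents u (ball 0 1)).ncard < N) :
    ∃ a : ℝ, a ≠ 0 ∧ ∃ f : ℂ → ℂ, AnalyticOnNhd ℂ f (ball 0 1) ∧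
      (∀ z ∈ ball (0 : ℂ) 1, (f z).re = a * u (T z)) ∧ (f 0).im = 0 ∧
      (∀ z ∈ closedBall (0 : ℂ) (1 / 2), ‖f z‖ ≤ 1) ∧
      (∃ z ∈ closedBall (0 : ℂ) (1 / 2), ‖f z‖ = 1) ∧
      (¬ (∃ c, ∀ z ∈ ball (0 : ℂ) 1, f z = c) → ∀ (y : ℝ) (G : Finset ℂ),
        (∀ z ∈ G, z ∈ ball (0 : ℂ) 1 ∧ f z = y * Complex.I ∧ deriv f z ≠ 0) → G.card ≤ N) := by
  have hT : T ⁻¹' ball 0 1 = ball 0 1 := by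
    rw [T.preimage_ball, map_zero]
  have hharm := hu.harmonicOnNhd_comp T isOpen_ball
  rw [hT] at hharm
  obtain ⟨F₀, hF₀, hre₀⟩ := hharm.exists_analyticOnNhd_ball_re_eq
  set F : ℂ → ℂ := fun z => F₀ z - (F₀ 0).im * Complex.I with hFdef
  have hF : AnalyticOnNhd ℂ F (ball 0 1) := hF₀.sub analyticOnNhd_const
  have hre : ∀ z ∈ ball (0 : ℂ) 1, (F z).re = u (T z) := fun z hz => by
    rw [← Function.comp_apply (f := u), ← hre₀ hz]
    simp [hFdef]
  have him : (F 0).im = 0 := by simp [hFdef]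
  have hsub : closedBall (0 : ℂ) (1 / 2) ⊆ ball 0 1 := closedBall_subset_ball (by norm_num)
  obtain ⟨z₀, hz₀, hmax⟩ := (isCompact_closedBall (0 : ℂ) (1 / 2)).exists_isMaxOn
    ⟨0, by simp⟩ (hF.continuousOn.mono hsub).norm
  have hpos : 0 < ‖F z₀‖ := by
    refine (norm_nonneg _).lt_of_ne fun h0 => ?_
    have hev : F =ᶠ[𝓝 0] 0 := by
      filter_upwards [closedBall_mem_nhds (0 : ℂ) (by norm_num : (0 : ℝ) < 1 / 2)] with z hz
      exact norm_le_zero_iff.1 ((hmax hz).trans h0.ge)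
    have heq := hF.eqOn_zero_of_preconnected_of_eventuallyEq_zero
      (convex_ball _ _).isPreconnected (by simp) hev
    obtain ⟨x, hx, hux⟩ := hne
    have hx' : T.symm x ∈ ball (0 : ℂ) 1 := by
      rw [← hT, mem_preimage, T.apply_symm_apply]
      exact hx
    apply hux
    rw [← T.apply_symm_apply x, ← hre _ hx', heq hx']
    rfl
  set a : ℝ := ‖F z₀‖⁻¹ with ha
  have ha0 : a ≠ 0 := inv_ne_zero hpos.ne'
  set f : ℂ → ℂ := fun z => a * F z with hf
  have hnorm : ∀ z, ‖f z‖ = ‖F z‖ / ‖F z₀‖ := fun z => by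
    rw [hf, norm_mul, Complex.norm_real, ha, norm_inv, norm_norm, inv_mul_eq_div]
  have hfa : AnalyticOnNhd ℂ f (ball 0 1) := analyticOnNhd_const.mul hF
  have hfre : ∀ z ∈ ball (0 : ℂ) 1, (f z).re = a * u (T z) := fun z hz => by
    rw [← hre z hz, hf, Complex.re_ofReal_mul]
  refine ⟨a, ha0, f, hfa, hfre, ?_, fun z hz => ?_, ⟨z₀, hz₀, ?_⟩, fun hnc y G hG => ?_⟩
  · rw [hf, Complex.im_ofReal_mul, him, mul_zero]
  · rw [hnorm, div_le_one hpos]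
    exact hmax hz
  · rw [hnorm, div_self hpos.ne']
  have hy : ∀ z ∈ ball (0 : ℂ) 1, (f z - y * Complex.I).re = a * u (T z) := fun z hz => by
    rw [← hfre z hz]
    simp
  refine ((card_lt_ncard_components T (u := fun x => a * u x) (f := fun z => f z - y * Complex.I)
    (hfa.sub analyticOnNhd_const) hy ?_ ?_ (U := ball 0 1 \ zeroSet u (ball 0 1)) ?_ hfin G ?_).trans
      hcount).le
  · rintro ⟨c, hc⟩
    exact hnc ⟨c + y * Complex.I, fun z hz => by rw [← hc z hz]; ring⟩
  · obtain ⟨x, hx, hux⟩ := hne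
    have hx' : T.symm x ∈ ball (0 : ℂ) 1 := by
      rw [← hT, mem_preimage, T.apply_symm_apply]
      exact hx
    exact ⟨_, hx', by rw [hy _ hx', T.apply_symm_apply]; exact mul_ne_zero ha0 hux⟩
  · ext x
    simp only [zeroSet, Set.mem_sdiff, mem_ofPred_eq, not_and, ne_eq, mul_eq_zero, ha0, false_or]
    tauto
  · intro z hz
    obtain ⟨h1, h2, h3⟩ := hG z hz
    exact ⟨h1, sub_eq_zero.2 h2, by simpa using h3⟩

end

theorem stmt4 (N : ℕ) (u : ℕ → En 2 → ℝ)
    (hharm : ∀ m, HarmonicOnSet (u m) (ball 0 1))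
    (hne : ∀ m, ∃ x ∈ ball (0 : En 2) 1, u m x ≠ 0)
    (hfin : ∀ m, (nodalComponents (u m) (ball 0 1)).Finite)
    (hcount : ∀ m, (nodalComponents (u m) (ball 0 1)).ncard < N) :
    ∃ φ : ℕ → ℕ, StrictMono φ ∧
      ∃ a : ℕ → ℝ, (∀ k, a k ≠ 0) ∧
      ∃ w : En 2 → ℝ, HarmonicOnSet w (ball 0 1) ∧
        (∃ x ∈ ball (0 : En 2) 1, w x ≠ 0) ∧
        ∀ K : Set (En 2), K ⊆ ball (0 : En 2) 1 → IsCompact K →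
          TendstoUniformlyOn (fun k x => a k * u (φ k) x) w atTop K := by
  set T : ℂ ≃ₗᵢ[ℝ] En 2 := Complex.orthonormalBasisOneI.repr
  choose a ha f hfa hre him hle hex hcard using fun m =>
    exists_normalized_analytic T (hharm m) (hne m) (hfin m) (hcount m)
  obtain ⟨φ, hφ, g, hg⟩ := exists_subseq_tendstoLocallyUniformlyOn
    (fun m => (hfa m).differentiableOn) fun r hr => by
      obtain ⟨C, hC⟩ := exists_norm_le_of_card_simple_zeros_le N hr
      exact ⟨C, fun m => hC (f m) (hfa m) (hle m) (hcard m)⟩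
  have hga : AnalyticOnNhd ℂ g (ball 0 1) := (hg.differentiableOn
    (Eventually.of_forall fun k => (hfa (φ k)).differentiableOn) isOpen_ball).analyticOnNhd
      isOpen_ball
  have hgK : ∀ K ⊆ ball (0 : ℂ) 1, IsCompact K →
      TendstoUniformlyOn (fun k => f (φ k)) g atTop K :=
    (tendstoLocallyUniformlyOn_iff_forall_isCompact isOpen_ball).1 hg
  have hg0 : (g 0).im = 0 := by
    have h := (Complex.continuous_im.tendsto _).comp (hg.tendsto_at (mem_ball_self one_pos))
    exact tendsto_nhds_unique h (by simp [Function.comp_def, him])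
  have hgne : ∃ z ∈ ball (0 : ℂ) 1, (g z).re ≠ 0 := by
    by_contra! h
    have hzero := eqOn_zero_of_re_eqOn_zero hga h hg0
    have hsub : closedBall (0 : ℂ) (1 / 2) ⊆ ball 0 1 := closedBall_subset_ball (by norm_num)
    obtain ⟨k, hk⟩ := (Metric.tendstoUniformlyOn_iff.1
      (hgK _ hsub (isCompact_closedBall _ _)) 1 one_pos).exists
    obtain ⟨z, hz, hz1⟩ := hex (φ k)
    have := hk z hz
    rw [hzero z (hsub hz), dist_zero_left, hz1] at this
    exact lt_irrefl _ this
  have hT : ∀ x ∈ ball (0 : En 2) 1, T.symm x ∈ ball (0 : ℂ) 1 := fun x hx => by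
    simpa using hx
  refine ⟨φ, hφ, fun k => a (φ k), fun k => ha _, (fun z => (g z).re) ∘ T.symm, ?_, ?_,
    fun K hK hKc => ?_⟩
  · have := harmonicOnSet_comp_symm T (h := fun z => (g z).re) (Ω := ball 0 1)
      fun z hz => (hga z hz).harmonicAt_re
    rwa [T.symm.preimage_ball, LinearIsometryEquiv.symm_symm, map_zero] at this
  · obtain ⟨z, hz, hne⟩ := hgne
    exact ⟨T z, by simpa using hz, by simpa using hne⟩
  · have hunif := hgK (T.symm '' K) (by rintro _ ⟨x, hx, rfl⟩; exact hT x (hK hx))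
      (hKc.image T.symm.continuous)
    rw [Metric.tendstoUniformlyOn_iff] at hunif ⊢
    intro ε hε
    filter_upwards [hunif ε hε] with k hk x hx
    refine lt_of_le_of_lt ?_ (hk _ (mem_image_of_mem _ hx))
    have h := hre (φ k) _ (hT x (hK hx))
    rw [T.apply_symm_apply] at h
    rw [Function.comp_apply, ← h, Real.dist_eq, ← Complex.sub_re, dist_eq_norm]
    exact Complex.abs_re_le_norm _
end
end

section
/- Let (U_n) and (V_n) be sequences of holomorphic functions on the open unit disc 𝔻 ⊂ ℂ such that Z(Im U_n) = Z(Im V_n) for every n, and suppose V_n converges uniformly on compact subsets of 𝔻 to the function V(z) = z^k for some positive integer k. Then for every ρ < 1 there exists n₀ = n₀(ρ) such that for every n > n₀ there is a holomorphic function g_n, defined on an open disc centered at 0 that contains V_n({|z| < ρ}) and taking real values on the real axis, with U_n(z) = g_n(V_n(z)) for all |z| < ρ. -/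
open Metric Set Complex Filter

noncomputable section

theorem isOpen_verticalStrip (a b : ℝ) : IsOpen (re ⁻¹' Ioo a b) :=
  isOpen_Ioo.preimage continuous_re

theorem convex_verticalStrip (a b : ℝ) : Convex ℝ (re ⁻¹' Ioo a b) :=
  (convex_Ioo a b).linear_preimage reLm

/-- The Schwarz reflection identity on a domain symmetric about the real axis. -/
theorem apply_conj_eq_conj_of_eventually_real {D : Set ℂ} (hD : IsOpen D)
    (hDc : IsPreconnected D) (hsymm : ∀ z ∈ D, (starRingEnd ℂ) z ∈ D) {f : ℂ → ℂ}
    (hf : DifferentiableOn ℂ f D) {x₀ : ℝ} (hx₀ : (x₀ : ℂ) ∈ D)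
    (hreal : ∀ᶠ x : ℝ in nhds x₀, (f x).im = 0) {z : ℂ} (hz : z ∈ D) :
    f ((starRingEnd ℂ) z) = (starRingEnd ℂ) (f z) := by
  have hg : DifferentiableOn ℂ ((starRingEnd ℂ) ∘ f ∘ (starRingEnd ℂ)) D := by
    intro w hw
    have h := (hf.differentiableAt (hD.mem_nhds (hsymm w hw))).hasDerivAt.conj_conj
    rw [conj_conj] at h
    exact h.differentiableAt.differentiableWithinAt
  have hfreq : ∃ᶠ w in nhdsWithin (x₀ : ℂ) {(x₀ : ℂ)}ᶜ,
      f w = ((starRingEnd ℂ) ∘ f ∘ (starRingEnd ℂ)) w := by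
    have ht : Tendsto (fun x : ℝ => (x : ℂ)) (nhdsWithin x₀ {x₀}ᶜ)
        (nhdsWithin (x₀ : ℂ) {(x₀ : ℂ)}ᶜ) := by
      refine tendsto_nhdsWithin_of_tendsto_nhds_of_eventually_within _
        (continuous_ofReal.continuousAt.tendsto.mono_left nhdsWithin_le_nhds) ?_
      filter_upwards [self_mem_nhdsWithin] with x hx
      simpa using hx
    refine ht.frequently (Eventually.frequently ?_)
    filter_upwards [nhdsWithin_le_nhds hreal] with x hx
    simp only [Function.comp_apply, conj_ofReal]
    exact (conj_eq_iff_im.2 hx).symm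
  have h := (hf.analyticOnNhd hD).eqOn_of_preconnected_of_frequently_eq
    (hg.analyticOnNhd hD) hDc hx₀ hfreq hz
  rw [h]
  simp

/-- A holomorphic function on a vertical strip that is close to the identity has a holomorphic
inverse on a slightly narrower strip. -/
theorem exists_inverse_on_verticalStrip {a b δ : ℝ} {L : ℂ → ℂ} (hδ : 0 ≤ δ)
    (hL : DifferentiableOn ℂ L (re ⁻¹' Ioo a b))
    (hL' : ∀ t ∈ re ⁻¹' Ioo a b, ‖deriv L t - 1‖ ≤ 1 / 2)
    (hLt : ∀ t ∈ re ⁻¹' Ioo a b, ‖L t - t‖ ≤ δ) :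
    InjOn L (re ⁻¹' Ioo a b) ∧ ∃ M : ℂ → ℂ,
      DifferentiableOn ℂ M (re ⁻¹' Ioo (a + 2 * δ) (b - 2 * δ)) ∧
      ∀ τ ∈ re ⁻¹' Ioo (a + 2 * δ) (b - 2 * δ), M τ ∈ re ⁻¹' Ioo a b ∧ L (M τ) = τ := by
  have hopen := isOpen_verticalStrip a b
  have happ : ApproximatesLinearOn L
      ((ContinuousLinearEquiv.refl ℂ ℂ : ℂ ≃L[ℂ] ℂ) : ℂ →L[ℂ] ℂ) (re ⁻¹' Ioo a b) (1 / 2) := by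
    intro x hx y hy
    have hder : ∀ t ∈ re ⁻¹' Ioo a b,
        HasDerivWithinAt (fun t => L t - t) (deriv L t - 1) (re ⁻¹' Ioo a b) t := fun t ht =>
      ((hL.differentiableAt (hopen.mem_nhds ht)).hasDerivAt.sub (hasDerivAt_id t)).hasDerivWithinAt
    have h := (convex_verticalStrip a b).norm_image_sub_le_of_norm_hasDerivWithin_le
      hder hL' hy hx
    calc _ = ‖L x - x - (L y - y)‖ := by congr 1; simp; ring
      _ ≤ _ := by simpa using h
  have hnorm : ‖((ContinuousLinearEquiv.refl ℂ ℂ).symm : ℂ →L[ℂ] ℂ)‖₊ = 1 := by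
    ext
    exact ContinuousLinearMap.norm_id
  have hc : Subsingleton ℂ ∨
      (1 / 2 : NNReal) < ‖((ContinuousLinearEquiv.refl ℂ ℂ).symm : ℂ →L[ℂ] ℂ)‖₊⁻¹ := by
    right
    rw [hnorm]
    norm_num
  set P := happ.toOpenPartialHomeomorph L _ hc hopen
  have htarget : ∀ τ ∈ re ⁻¹' Ioo (a + 2 * δ) (b - 2 * δ), τ ∈ P.target := by
    intro τ hτ
    have hsub : closedBall τ (2 * δ) ⊆ re ⁻¹' Ioo a b := by
      intro t ht
      have h1 := (abs_re_le_norm (t - τ)).trans (mem_closedBall_iff_norm.1 ht)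
      rw [sub_re, abs_le] at h1
      have := hτ.1
      have := hτ.2
      exact ⟨by linarith, by linarith⟩
    refine happ.closedBall_subset_target hc hopen (by positivity) hsub ?_
    rw [mem_closedBall, dist_comm, dist_eq_norm, hnorm]
    have := hLt τ (hsub (mem_closedBall_self (by positivity)))
    push_cast
    linarith
  refine ⟨happ.injOn hc, P.symm, ?_, fun τ hτ =>
    ⟨P.map_target (htarget τ hτ), P.right_inv (htarget τ hτ)⟩⟩
  intro τ hτ
  have hmem : P.symm τ ∈ re ⁻¹' Ioo a b := P.map_target (htarget τ hτ)
  have hne : deriv L (P.symm τ) ≠ 0 := by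
    intro h0
    have := hL' _ hmem
    rw [h0] at this
    norm_num at this
  exact (P.hasDerivAt_symm (htarget τ hτ) hne
    (hL.differentiableAt (hopen.mem_nhds hmem)).hasDerivAt).differentiableAt.differentiableWithinAt

/-- A holomorphic function on a vertical strip that is real on the lines `Im t = 0` and
`Im t = p` is periodic with period `2 p i`. -/
theorem periodic_of_real_on_lines {a b p : ℝ} (hab : a < b) {F : ℂ → ℂ}
    (hF : DifferentiableOn ℂ F (re ⁻¹' Ioo a b))
    (h0 : ∀ x : ℝ, x ∈ Ioo a b → (F x).im = 0)
    (hp : ∀ x : ℝ, x ∈ Ioo a b → (F (x + p * I)).im = 0) {t : ℂ} (ht : t ∈ re ⁻¹' Ioo a b) :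
    F (t + 2 * p * I) = F t := by
  have hsymm : ∀ z ∈ re ⁻¹' Ioo a b, (starRingEnd ℂ) z ∈ re ⁻¹' Ioo a b := fun z hz => by
    simpa using hz
  have hmid : (a + b) / 2 ∈ Ioo a b := ⟨by linarith, by linarith⟩
  have hmid' : (((a + b) / 2 : ℝ) : ℂ) ∈ re ⁻¹' Ioo a b := by
    simpa only [mem_preimage, ofReal_re] using hmid
  have hnear : ∀ᶠ x : ℝ in nhds ((a + b) / 2), x ∈ Ioo a b := isOpen_Ioo.mem_nhds hmid
  have hconn := (convex_verticalStrip a b).isPreconnected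
  have h1 := apply_conj_eq_conj_of_eventually_real (isOpen_verticalStrip a b) hconn hsymm hF hmid'
    (hnear.mono h0) ht
  have hG : DifferentiableOn ℂ (fun t => F (t + p * I)) (re ⁻¹' Ioo a b) :=
    hF.comp (by fun_prop) fun z hz => by simpa using hz
  have ht' : (starRingEnd ℂ) t - p * I ∈ re ⁻¹' Ioo a b := by simpa using ht
  have h2 := apply_conj_eq_conj_of_eventually_real (isOpen_verticalStrip a b) hconn hsymm hG hmid'
    (hnear.mono hp) ht'
  simp only [map_sub, conj_conj, map_mul, conj_ofReal, conj_I, sub_add_cancel] at h2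
  rw [h1, conj_conj] at h2
  rw [← h2]
  congr 1
  ring

theorem differentiableOn_circleIntegral_div_sub {φ V : ℂ → ℂ} {R s : ℝ} (hR : 0 ≤ R)
    (hφ : ContinuousOn φ (sphere 0 R)) (hV : ContinuousOn V (sphere 0 R))
    (hs : ∀ z ∈ sphere (0 : ℂ) R, s ≤ ‖V z‖) :
    DifferentiableOn ℂ (fun w => ∮ z in C(0, R), φ z / (V z - w)) (ball 0 s) := by
  intro w hw
  rw [mem_ball_zero_iff] at hw
  have hmem : ∀ θ, circleMap 0 R θ ∈ sphere (0 : ℂ) R := circleMap_mem_sphere 0 hR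
  have hφc : Continuous fun θ => deriv (circleMap 0 R) θ * φ (circleMap 0 R θ) := by
    simp only [deriv_circleMap]
    exact ((continuous_circleMap 0 R).mul continuous_const).mul
      (hφ.comp_continuous (continuous_circleMap 0 R) hmem)
  have hVc : Continuous fun θ => V (circleMap 0 R θ) :=
    hV.comp_continuous (continuous_circleMap 0 R) hmem
  set d := (s - ‖w‖) / 2 with hd
  have hd0 : 0 < d := by linarith
  have hlow : ∀ θ, ∀ x ∈ ball w d, d ≤ ‖V (circleMap 0 R θ) - x‖ := by
    intro θ x hx
    have h1 := norm_sub_norm_le (V (circleMap 0 R θ)) x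
    have h2 := norm_sub_norm_le x w
    have h3 := mem_ball_iff_norm.1 hx
    have h4 := hs _ (hmem θ)
    linarith
  have hne : ∀ θ, ∀ x ∈ ball w d, V (circleMap 0 R θ) - x ≠ 0 := fun θ x hx =>
    norm_pos_iff.1 (hd0.trans_le (hlow θ x hx))
  have hcont : ∀ x ∈ ball w d, Continuous fun θ =>
      deriv (circleMap 0 R) θ * φ (circleMap 0 R θ) / (V (circleMap 0 R θ) - x) := fun x hx =>
    hφc.div (hVc.sub continuous_const) fun θ => hne θ x hx
  have hcont' : Continuous fun θ =>
      deriv (circleMap 0 R) θ * φ (circleMap 0 R θ) / (V (circleMap 0 R θ) - w) ^ 2 :=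
    hφc.div ((hVc.sub continuous_const).pow 2) fun θ =>
      pow_ne_zero _ (hne θ w (mem_ball_self hd0))
  have := (intervalIntegral.hasDerivAt_integral_of_dominated_loc_of_deriv_le
    (a := 0) (b := 2 * Real.pi) (μ := MeasureTheory.volume)
    (F := fun x θ => deriv (circleMap 0 R) θ * φ (circleMap 0 R θ) / (V (circleMap 0 R θ) - x))
    (F' := fun x θ =>
      deriv (circleMap 0 R) θ * φ (circleMap 0 R θ) / (V (circleMap 0 R θ) - x) ^ 2)
    (bound := fun θ => ‖deriv (circleMap 0 R) θ * φ (circleMap 0 R θ)‖ / d ^ 2)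
    (ball_mem_nhds w hd0)
    (by
      filter_upwards [ball_mem_nhds w hd0] with x hx
      exact (hcont x hx).aestronglyMeasurable)
    ((hcont w (mem_ball_self hd0)).intervalIntegrable _ _)
    hcont'.aestronglyMeasurable
    (Eventually.of_forall fun θ _ x hx => by
      rw [norm_div, norm_pow]
      gcongr
      exact hlow θ x hx)
    ((hφc.norm.div_const _).intervalIntegrable _ _)
    (Eventually.of_forall fun θ _ x hx => by
      have h := ((hasDerivAt_id x).const_sub (V (circleMap 0 R θ))).inv (hne θ x hx)
      have h' := h.const_mul (deriv (circleMap 0 R) θ * φ (circleMap 0 R θ))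
      convert! h' using 1
      simp [div_eq_mul_inv])).2
  refine DifferentiableAt.differentiableWithinAt ?_
  convert! this.differentiableAt using 2 with x
  simp only [circleIntegral, smul_eq_mul, mul_div_assoc]


theorem circleIntegral_sub_mul_deriv_div_sub_eq_zero {D : Set ℂ} (hD : IsOpen D) {R : ℝ}
    (hR : 0 ≤ R) (hRD : closedBall 0 R ⊆ D) {U V : ℂ → ℂ} (hU : DifferentiableOn ℂ U D)
    (hV : DifferentiableOn ℂ V D) {u w : ℂ} (hsphere : ∀ z ∈ sphere (0 : ℂ) R, V z ≠ w)
    (hfib : ∀ z ∈ closedBall (0 : ℂ) R, V z = w → U z = u ∧ deriv V z ≠ 0) :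
    (∮ z in C(0, R), (U z - u) * deriv V z / (V z - w)) = 0 := by
  classical
  have hV' : DifferentiableOn ℂ (deriv V) D := hV.deriv hD
  let f : ℂ → ℂ := fun z => if V z = w then deriv U z else (U z - u) * deriv V z / (V z - w)
  have hf : ∀ z ∈ closedBall (0 : ℂ) R, DifferentiableAt ℂ f z := by
    intro z hz
    have hzD := hD.mem_nhds (hRD hz)
    have hVz := hV.differentiableAt hzD
    by_cases hw : V z = w
    · obtain ⟨hu, hne⟩ := hfib z hz hw
      have hdU : DifferentiableAt ℂ (dslope U z) z :=
        ((differentiableOn_dslope hzD).2 hU).differentiableAt hzD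
      have hdV : DifferentiableAt ℂ (dslope V z) z :=
        ((differentiableOn_dslope hzD).2 hV).differentiableAt hzD
      have hne' : dslope V z z ≠ 0 := by rwa [dslope_same]
      refine ((hdU.mul (hV'.differentiableAt hzD)).div hdV hne').congr_of_eventuallyEq ?_
      filter_upwards [hdV.continuousAt.eventually_ne hne'] with y hy
      by_cases hyz : y = z
      · subst hyz
        simp only [f, if_pos hw, Pi.mul_apply, Pi.div_apply, dslope_same]
        field_simp
      · have hyz' : y - z ≠ 0 := sub_ne_zero.2 hyz
        simp only [Pi.mul_apply, Pi.div_apply]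
        rw [dslope_of_ne _ hyz, slope_def_field] at hy
        have hVy : V y ≠ w := fun h => hy (by rw [h, hw]; simp)
        have hVy' : V y - w ≠ 0 := sub_ne_zero.2 hVy
        rw [dslope_of_ne _ hyz, dslope_of_ne _ hyz, slope_def_field, slope_def_field, hw, hu]
        simp only [f, if_neg hVy]
        field_simp
    · refine ((((hU.differentiableAt hzD).sub_const u).mul (hV'.differentiableAt hzD)).div
        (hVz.sub_const w) (sub_ne_zero.2 hw)).congr_of_eventuallyEq ?_
      filter_upwards [hVz.continuousAt.eventually_ne hw] with y hy
      simp [f, hy]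
  have h0 : (∮ z in C(0, R), f z) = 0 :=
    circleIntegral_eq_zero_of_differentiable_on_off_countable hR countable_empty
      (fun z hz => (hf z hz).continuousAt.continuousWithinAt)
      fun z hz => hf z (ball_subset_closedBall hz.1)
  refine Eq.trans (circleIntegral.integral_congr hR fun z hz => ?_) h0
  simp only [f, if_neg (hsphere z hz)]

theorem circleIntegral_deriv_div_sub_eq {D : Set ℂ} (hD : IsOpen D) {R : ℝ}
    (hR : 0 < R) (hRD : sphere 0 R ⊆ D) {V : ℂ → ℂ} (hV : DifferentiableOn ℂ V D) {k : ℕ} {w : ℂ}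
    (hclose : ∀ z ∈ sphere (0 : ℂ) R, ‖V z - z ^ k‖ < ‖z ^ k‖)
    (hw : ∀ z ∈ sphere (0 : ℂ) R, ‖w‖ < ‖V z‖) :
    (∮ z in C(0, R), deriv V z / (V z - w)) = 2 * Real.pi * I * k := by
  have hne : ∀ z ∈ sphere (0 : ℂ) R, z ≠ 0 := fun z hz => ne_of_mem_sphere hz hR.ne'
  have hVne : ∀ z ∈ sphere (0 : ℂ) R, V z ≠ 0 := fun z hz =>
    norm_pos_iff.1 ((norm_nonneg w).trans_lt (hw z hz))
  have hVw : ∀ z ∈ sphere (0 : ℂ) R, V z - w ≠ 0 := fun z hz h => by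
    have := hw z hz
    rw [sub_eq_zero.1 h] at this
    exact this.false
  have hprim : ∀ z ∈ sphere (0 : ℂ) R,
      HasDerivWithinAt (fun z => log (1 - w / V z) + log (V z / z ^ k))
        (deriv V z / (V z - w) - k * (z - 0)⁻¹) (sphere 0 R) z := by
    intro z hz
    have hz0 := hne z hz
    have hV0 := hVne z hz
    have hVw0 := hVw z hz
    have hVd := (hV.differentiableAt (hD.mem_nhds (hRD hz))).hasDerivAt
    have h1 : 1 - w / V z ∈ slitPlane := by
      rw [sub_eq_add_neg]
      refine mem_slitPlane_of_norm_lt_one ?_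
      rw [norm_neg, norm_div, div_lt_one (norm_pos_iff.2 hV0)]
      exact hw z hz
    have h2 : V z / z ^ k ∈ slitPlane := by
      have : V z / z ^ k = 1 + (V z - z ^ k) / z ^ k := by
        field_simp
        ring
      rw [this]
      refine mem_slitPlane_of_norm_lt_one ?_
      rw [norm_div, div_lt_one (norm_pos_iff.2 (pow_ne_zero _ hz0))]
      exact hclose z hz
    have hd1 := (((hasDerivAt_const z w).div hVd hV0).const_sub 1).clog h1
    have hd2 := (hVd.div (hasDerivAt_pow k z) (pow_ne_zero k hz0)).clog h2
    refine HasDerivAt.hasDerivWithinAt ?_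
    convert! hd1.add hd2 using 1
    have h3 : 1 - w / V z ≠ 0 := slitPlane_ne_zero h1
    have e1 : 1 - w / V z = (V z - w) / V z := by field_simp
    have e2 : -((0 * V z - w * deriv V z) / V z ^ 2) / (1 - w / V z) =
        w * deriv V z / (V z * (V z - w)) := by
      rw [e1]; field_simp; ring
    have e3 : (deriv V z * z ^ k - V z * (k * z ^ (k - 1))) / (z ^ k) ^ 2 / (V z / z ^ k) =
        deriv V z / V z - k * (z - 0)⁻¹ := by
      rcases k with - | m
      · simp
      · simp only [Nat.add_sub_cancel, sub_zero]
        field_simp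
        ring
    simp only [Pi.div_apply]
    rw [e2, e3]
    field_simp
    ring
  have h0 := circleIntegral.integral_eq_zero_of_hasDerivWithinAt hR.le hprim
  have hc1 : CircleIntegrable (fun z => deriv V z / (V z - w)) 0 R :=
    ContinuousOn.circleIntegrable hR.le <|
      ((hV.deriv hD).continuousOn.mono hRD).div ((hV.continuousOn.mono hRD).sub
        continuousOn_const) hVw
  have hc2 : CircleIntegrable (fun z : ℂ => k * (z - 0)⁻¹) 0 R :=
    ContinuousOn.circleIntegrable hR.le <| continuousOn_const.mul <|
      (continuousOn_id.sub continuousOn_const).inv₀ fun z hz => by simpa using hne z hz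
  rw [circleIntegral.integral_sub hc1 hc2, circleIntegral.integral_const_mul,
    circleIntegral.integral_sub_center_inv 0 hR.ne', sub_eq_zero] at h0
  rw [h0]
  ring

/-- If `V` is close to `z ^ k` on an annulus then `V (exp t) = exp (k L(t))` there for some
holomorphic `L` close to the identity. -/
theorem exists_log_coordinate {a b η : ℝ} {k : ℕ} (hk : 0 < k) (hη : η ≤ 1 / 2) {V : ℂ → ℂ}
    (hV : ∀ t ∈ re ⁻¹' Ioo a b, DifferentiableAt ℂ V (exp t))
    (hclose : ∀ t ∈ re ⁻¹' Ioo a b, ‖V (exp t) - exp t ^ k‖ ≤ η * ‖exp t ^ k‖) :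
    ∃ L : ℂ → ℂ, DifferentiableOn ℂ L (re ⁻¹' Ioo a b) ∧
      ∀ t ∈ re ⁻¹' Ioo a b, ‖L t - t‖ ≤ 2 * η ∧ exp (k * L t) = V (exp t) := by
  have hk0 : (k : ℂ) ≠ 0 := Nat.cast_ne_zero.2 hk.ne'
  have hpow : ∀ t : ℂ, exp t ^ k ≠ 0 := fun t => pow_ne_zero _ (exp_ne_zero t)
  have hsplit : ∀ t, V (exp t) / exp t ^ k = 1 + (V (exp t) - exp t ^ k) / exp t ^ k := by
    intro t
    have := hpow t
    field_simp
    ring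
  have hnorm : ∀ t ∈ re ⁻¹' Ioo a b, ‖(V (exp t) - exp t ^ k) / exp t ^ k‖ ≤ η := by
    intro t ht
    rw [norm_div, div_le_iff₀ (norm_pos_iff.2 (hpow t))]
    exact hclose t ht
  have hslit : ∀ t ∈ re ⁻¹' Ioo a b, V (exp t) / exp t ^ k ∈ slitPlane := by
    intro t ht
    rw [hsplit]
    exact mem_slitPlane_of_norm_lt_one ((hnorm t ht).trans_lt (by linarith))
  refine ⟨fun t => t + log (V (exp t) / exp t ^ k) / k, ?_, ?_⟩
  · intro t ht
    have h1 : DifferentiableAt ℂ (fun t => V (exp t)) t :=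
      (hV t ht).comp t differentiable_exp.differentiableAt
    have h2 : DifferentiableAt ℂ (fun t => V (exp t) / exp t ^ k) t :=
      h1.div (by fun_prop) (hpow t)
    exact (differentiableAt_id.add
      ((h2.clog (hslit t ht)).div_const _)).differentiableWithinAt
  · intro t ht
    constructor
    · have h1 : (1 : ℝ) ≤ k := by exact_mod_cast hk
      have h2 := norm_log_one_add_half_le_self ((hnorm t ht).trans hη)
      have h3 := hnorm t ht
      have h4 : 0 ≤ η := (norm_nonneg _).trans h3
      rw [add_sub_cancel_left, norm_div, norm_natCast, hsplit]
      refine (div_le_self (norm_nonneg _) h1).trans (h2.trans ?_)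
      linarith
    · rw [mul_add, mul_div_cancel₀ _ hk0, exp_add, exp_log (slitPlane_ne_zero (hslit t ht)),
        exp_nat_mul, mul_div_cancel₀ _ (hpow t)]

theorem norm_deriv_sub_one_le {a b c δ : ℝ} (hc : 0 < c) (hδ : δ ≤ c / 4) {L : ℂ → ℂ}
    (hL : DifferentiableOn ℂ L (re ⁻¹' Ioo a b))
    (hLt : ∀ t ∈ re ⁻¹' Ioo a b, ‖L t - t‖ ≤ δ) {t : ℂ} (ht : t ∈ re ⁻¹' Ioo (a + c) (b - c)) :
    ‖deriv L t - 1‖ ≤ 1 / 2 := by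
  have hsub : closedBall t (c / 2) ⊆ re ⁻¹' Ioo a b := by
    intro s hs
    have h1 := (abs_re_le_norm (s - t)).trans (mem_closedBall_iff_norm.1 hs)
    rw [sub_re, abs_le] at h1
    have := ht.1
    have := ht.2
    exact ⟨by linarith, by linarith⟩
  have hd : DifferentiableOn ℂ (fun s => L s - s) (re ⁻¹' Ioo a b) := hL.sub differentiableOn_id
  have h := norm_deriv_le_of_forall_mem_sphere_norm_le (c := t) (half_pos hc)
    ((hd.mono hsub).mono closure_ball_subset_closedBall).diffContOnCl
    fun s hs => hLt s (hsub (sphere_subset_closedBall hs))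
  have hLat := hL.differentiableAt ((isOpen_verticalStrip a b).mem_nhds
    (hsub (mem_closedBall_self (by positivity))))
  have hder : HasDerivAt (fun s => L s - s) (deriv L t - 1) t :=
    hLat.hasDerivAt.sub (hasDerivAt_id t)
  rw [hder.deriv] at h
  refine h.trans ?_
  rw [div_le_iff₀ (by positivity)]
  linarith

/-- If `V` is close to `z ^ k` on an annulus and `U` is real wherever `V` is, then `U` is constant
on the fibres of `V` in a smaller annulus. -/
theorem eq_of_fibre_eq_of_annulus {c η : ℝ} {k : ℕ} (hk : 0 < k) (hc : 0 < c) (hη : 0 ≤ η)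
    (hηc : 2 * η ≤ c / 4) (hη2 : η ≤ 1 / 2) {U V : ℂ → ℂ}
    (hU : DifferentiableOn ℂ U (ball 0 1)) (hV : DifferentiableOn ℂ V (ball 0 1))
    (hreal : ∀ z ∈ ball (0 : ℂ) 1, (V z).im = 0 → (U z).im = 0)
    (hclose : ∀ t ∈ re ⁻¹' Ioo (-9 * c) (-c), ‖V (exp t) - exp t ^ k‖ ≤ η * ‖exp t ^ k‖) :
    (∀ t₀ ∈ re ⁻¹' Ioo (-6 * c) (-5 * c), ∀ t ∈ re ⁻¹' Ioo (-8 * c) (-2 * c),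
      V (exp t) = V (exp t₀) → U (exp t) = U (exp t₀)) ∧
    (∀ t ∈ re ⁻¹' Ioo (-8 * c) (-2 * c), deriv V (exp t) ≠ 0) ∧
    ∀ x ∈ Ioo (-7 * c) (-5.5 * c), ∃ t : ℂ, t.re < -5 * c ∧ V (exp t) = (Real.exp (k * x) : ℝ) := by
  have hk0 : (k : ℂ) ≠ 0 := Nat.cast_ne_zero.2 hk.ne'
  have hball : ∀ t ∈ re ⁻¹' Ioo (-9 * c) (-c), exp t ∈ ball (0 : ℂ) 1 := by
    intro t ht
    rw [mem_ball_zero_iff, norm_exp, Real.exp_lt_one_iff]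
    linarith [ht.2]
  have hVd : ∀ t ∈ re ⁻¹' Ioo (-9 * c) (-c), DifferentiableAt ℂ V (exp t) := fun t ht =>
    hV.differentiableAt (isOpen_ball.mem_nhds (hball t ht))
  obtain ⟨L, hL, hLV⟩ := exists_log_coordinate hk hη2 hVd hclose
  have hsub : re ⁻¹' Ioo (-8 * c) (-2 * c) ⊆ re ⁻¹' Ioo (-9 * c) (-c) := fun t ht =>
    ⟨by linarith [ht.1], by linarith [ht.2]⟩
  have hL' : ∀ t ∈ re ⁻¹' Ioo (-8 * c) (-2 * c), ‖deriv L t - 1‖ ≤ 1 / 2 := fun t ht =>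
    norm_deriv_sub_one_le hc hηc hL (fun s hs => (hLV s hs).1)
      ⟨by linarith [ht.1], by linarith [ht.2]⟩
  obtain ⟨hinj, M, hM, hLM⟩ := exists_inverse_on_verticalStrip (by positivity) (hL.mono hsub) hL'
    fun t ht => (hLV t (hsub ht)).1
  have hre : ∀ t ∈ re ⁻¹' Ioo (-9 * c) (-c), |(L t).re - t.re| ≤ c / 4 := fun t ht => by
    rw [← sub_re]
    exact (abs_re_le_norm _).trans ((hLV t ht).1.trans hηc)
  set a := -8 * c + 2 * (2 * η) with ha
  set b := -2 * c - 2 * (2 * η) with hb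
  have hVM : ∀ τ ∈ re ⁻¹' Ioo a b, V (exp (M τ)) = exp (k * τ) := fun τ hτ => by
    rw [← (hLV _ (hsub (hLM τ hτ).1)).2, (hLM τ hτ).2]
  have hUM : ∀ τ ∈ re ⁻¹' Ioo a b, (exp (k * τ)).im = 0 → (U (exp (M τ))).im = 0 :=
    fun τ hτ h => hreal _ (hball _ (hsub (hLM τ hτ).1)) (by rwa [hVM τ hτ])
  have hF : DifferentiableOn ℂ (fun τ => U (exp (M τ))) (re ⁻¹' Ioo a b) :=
    hU.comp hM.cexp fun τ hτ => hball _ (hsub (hLM τ hτ).1)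
  have hexp_real : ∀ x : ℝ, (exp (k * x)).im = 0 := fun x => by
    rw [← ofReal_natCast, ← ofReal_mul, exp_ofReal_im]
  have hper : ∀ τ ∈ re ⁻¹' Ioo a b,
      U (exp (M (τ + 2 * (Real.pi / k : ℝ) * I))) = U (exp (M τ)) := fun τ hτ => by
    refine periodic_of_real_on_lines (by linarith) hF ?_ ?_ hτ
    · intro x hx
      exact hUM x (by simpa only [mem_preimage, ofReal_re] using hx) (hexp_real x)
    · intro x hx
      refine hUM _ (by simpa using hx) ?_
      have : (k : ℂ) * (x + (Real.pi / k : ℝ) * I) = k * x + Real.pi * I := by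
        push_cast
        field_simp
      rw [this, exp_add, exp_pi_mul_I, mul_neg_one, neg_im, hexp_real, neg_zero]
  have hperiod : ∀ n : ℤ, ∀ τ ∈ re ⁻¹' Ioo a b,
      U (exp (M (τ + n * (2 * (Real.pi / k : ℝ) * I)))) = U (exp (M τ)) := by
    intro n
    have hshift : ∀ m : ℤ, ∀ τ ∈ re ⁻¹' Ioo a b,
        τ + m * (2 * (Real.pi / k : ℝ) * I) ∈ re ⁻¹' Ioo a b := fun m τ hτ => by
      simpa [-ofReal_div] using hτ
    induction n using Int.induction_on with
    | zero => intro τ _; simp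
    | succ n ih =>
      intro τ hτ
      rw [← ih τ hτ, ← hper _ (hshift n τ hτ)]
      congr 3
      push_cast
      ring
    | pred n ih =>
      intro τ hτ
      rw [← ih τ hτ, ← hper _ (hshift (-n - 1) τ hτ)]
      congr 3
      push_cast
      ring
  refine ⟨?_, ?_, ?_⟩
  · intro t₀ ht₀ t ht hVt
    have ht₀' : t₀ ∈ re ⁻¹' Ioo (-8 * c) (-2 * c) := ⟨by linarith [ht₀.1], by linarith [ht₀.2]⟩
    have h1 := abs_le.1 (hre t₀ (hsub ht₀'))
    have hLt₀ : L t₀ ∈ re ⁻¹' Ioo a b := ⟨by linarith [ht₀.1], by linarith [ht₀.2]⟩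
    rw [← (hLV t (hsub ht)).2, ← (hLV t₀ (hsub ht₀')).2, exp_eq_exp_iff_exists_int] at hVt
    obtain ⟨n, hn⟩ := hVt
    have hLt : L t = L t₀ + n * (2 * (Real.pi / k : ℝ) * I) := by
      refine mul_left_cancel₀ hk0 (hn.trans ?_)
      push_cast
      field_simp
    have hLt' : L t ∈ re ⁻¹' Ioo a b := by
      rw [hLt]
      simpa [-ofReal_div] using hLt₀
    have h2 := hperiod n _ hLt₀
    rw [← hLt, hinj (hLM _ hLt').1 ht (hLM _ hLt').2, hinj (hLM _ hLt₀).1 ht₀' (hLM _ hLt₀).2] at h2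
    exact h2
  · intro t ht h0
    have hnhds := (isOpen_verticalStrip (-9 * c) (-c)).mem_nhds (hsub ht)
    have hd1 : HasDerivAt (fun t => V (exp t)) (deriv V (exp t) * exp t) t :=
      (hVd t (hsub ht)).hasDerivAt.comp t (hasDerivAt_exp t)
    have hd2 : HasDerivAt (fun t => exp (k * L t)) (exp (k * L t) * (k * deriv L t)) t :=
      ((hL.differentiableAt hnhds).hasDerivAt.const_mul (k : ℂ)).cexp
    have heq : (fun t => exp (k * L t)) =ᶠ[nhds t] fun t => V (exp t) := by
      filter_upwards [hnhds] with s hs using (hLV s hs).2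
    have h := (hd2.congr_of_eventuallyEq heq.symm).unique hd1
    rw [h0, zero_mul, mul_eq_zero, mul_eq_zero] at h
    rcases h with h | h | h
    · exact exp_ne_zero _ h
    · exact hk0 h
    · have := hL' t ht
      rw [h] at this
      norm_num at this
  · intro x hx
    have hxs : (x : ℂ) ∈ re ⁻¹' Ioo a b := by
      simp only [mem_preimage, ofReal_re]
      exact ⟨by linarith [hx.1], by linarith [hx.2]⟩
    refine ⟨M x, ?_, ?_⟩
    · have h1 := abs_le.1 (hre _ (hsub (hLM _ hxs).1))
      rw [(hLM _ hxs).2, ofReal_re] at h1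
      linarith [hx.2]
    · rw [hVM _ hxs]
      push_cast
      rfl

/-- If `V` is sufficiently close to `z ^ k` on a disc and `U` is real wherever `V` is, then `U`
factors through `V` on a smaller disc. -/
theorem exists_factorization_of_close {c q Q η : ℝ} {k : ℕ} (hk : 0 < k) (hc : 0 < c)
    (hq : q = Real.exp (-c)) (hQ : Q = q ^ k) (hη : η = (1 - q) / 8) {U V : ℂ → ℂ}
    (hU : DifferentiableOn ℂ U (ball 0 1)) (hV : DifferentiableOn ℂ V (ball 0 1))
    (hreal : ∀ z ∈ ball (0 : ℂ) 1, (V z).im = 0 → (U z).im = 0)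
    (hclose : ∀ z ∈ closedBall (0 : ℂ) q, ‖V z - z ^ k‖ ≤ η * Q ^ 9) :
    ∃ (s : ℝ) (g : ℂ → ℂ), 0 < s ∧ V '' ball (0 : ℂ) (q ^ 5) ⊆ ball (0 : ℂ) s ∧
      DifferentiableOn ℂ g (ball (0 : ℂ) s) ∧
      (∀ x : ℝ, (x : ℂ) ∈ ball (0 : ℂ) s → (g x).im = 0) ∧
      ∀ z ∈ ball (0 : ℂ) (q ^ 5), U z = g (V z) := by
  have hq0 : 0 < q := hq ▸ Real.exp_pos _
  have hq1 : q < 1 := by rw [hq, Real.exp_lt_one_iff]; linarith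
  have hη0 : 0 < η := by linarith
  have hQ0 : 0 < Q := hQ ▸ pow_pos hq0 k
  have hQq : Q ≤ q := hQ ▸ pow_le_of_le_one hq0.le hq1.le hk.ne'
  have hηc : 2 * η ≤ c / 4 := by
    have := Real.add_one_le_exp (-c)
    rw [← hq] at this
    linarith
  have hexp : ∀ j : ℕ, Real.exp (-j * c) = q ^ j := fun j => by
    rw [hq, ← Real.exp_nat_mul]
    congr 1
    ring
  have hpow : ∀ j : ℕ, (q ^ j) ^ k = Q ^ j := fun j => by rw [hQ, ← pow_mul, ← pow_mul, mul_comm]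
  have hball : ∀ j : ℕ, 1 ≤ j → closedBall (0 : ℂ) (q ^ j) ⊆ closedBall 0 q := fun j hj =>
    closedBall_subset_closedBall (pow_le_of_le_one hq0.le hq1.le (by omega))
  have hQ9 : ∀ j : ℕ, j ≤ 9 → Q ^ 9 ≤ Q ^ j := fun j hj =>
    pow_le_pow_of_le_one hQ0.le (hQq.trans hq1.le) hj
  have hlt : ∀ j : ℕ, j ≤ 9 → Q ^ (j + 1) + 2 * (η * Q ^ 9) < Q ^ j := fun j hj => by
    have h1 : Q + 2 * η < 1 := by linarith
    have h2 := mul_lt_mul_of_pos_left h1 (pow_pos hQ0 j)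
    have h3 := mul_le_mul_of_nonneg_left (hQ9 j hj) hη0.le
    rw [pow_succ]
    nlinarith
  have hηQ : 0 < η * Q ^ 9 := by positivity
  have hq3 : closedBall (0 : ℂ) (q ^ 3) ⊆ ball 0 1 :=
    (hball 3 (by norm_num)).trans (closedBall_subset_ball hq1)
  have hq5 : ball (0 : ℂ) (q ^ 5) ⊆ closedBall 0 q :=
    ball_subset_closedBall.trans (hball 5 (by norm_num))
  have hV5 : ∀ z ∈ ball (0 : ℂ) (q ^ 5), V z ∈ ball (0 : ℂ) (Q ^ 4) := fun z hz => by
    have h1 := hclose z (hq5 hz)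
    have h2 : ‖z ^ k‖ ≤ Q ^ 5 := by
      rw [norm_pow, ← hpow]
      exact pow_le_pow_left₀ (norm_nonneg _) (mem_ball_zero_iff.1 hz).le k
    have h3 := norm_sub_norm_le (V z) (z ^ k)
    have h4 : Q ^ 5 + 2 * (η * Q ^ 9) < Q ^ 4 := hlt 4 (by norm_num)
    rw [mem_ball_zero_iff]
    linarith
  have hpow3 : ∀ z ∈ sphere (0 : ℂ) (q ^ 3), ‖z ^ k‖ = Q ^ 3 := fun z hz => by
    rw [norm_pow, mem_sphere_zero_iff_norm.1 hz, hpow]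
  have hclose3 : ∀ z ∈ sphere (0 : ℂ) (q ^ 3), ‖V z - z ^ k‖ ≤ η * Q ^ 9 := fun z hz =>
    hclose z (hball 3 (by norm_num) (sphere_subset_closedBall hz))
  have hV3 : ∀ z ∈ sphere (0 : ℂ) (q ^ 3), Q ^ 4 < ‖V z‖ := fun z hz => by
    have h1 := hclose3 z hz
    rw [norm_sub_rev] at h1
    have h3 := norm_sub_norm_le (z ^ k) (V z)
    have h4 : Q ^ 4 + 2 * (η * Q ^ 9) < Q ^ 3 := hlt 3 (by norm_num)
    rw [hpow3 z hz] at h3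
    linarith
  obtain ⟨hfib, hderiv, hvalues⟩ := eq_of_fibre_eq_of_annulus hk hc hη0.le hηc (by linarith) hU hV
    hreal fun t ht => by
      have h1 : ‖exp t‖ = Real.exp t.re := norm_exp t
      refine (hclose _ ?_).trans (mul_le_mul_of_nonneg_left ?_ hη0.le)
      · rw [mem_closedBall_zero_iff, h1, hq]
        exact Real.exp_le_exp.2 ht.2.le
      · rw [norm_pow, ← hpow, ← hexp, h1]
        exact pow_le_pow_left₀ (Real.exp_pos _).le
          (Real.exp_le_exp.2 (by push_cast; exact ht.1.le)) k
  have hDopen : IsOpen (ball (0 : ℂ) 1) := isOpen_ball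
  have hk0 : (k : ℂ) ≠ 0 := Nat.cast_ne_zero.2 hk.ne'
  have hc0 : (2 * Real.pi * I * k : ℂ) ≠ 0 := mul_ne_zero two_pi_I_ne_zero hk0
  let g : ℂ → ℂ := fun w =>
    (2 * Real.pi * I * k)⁻¹ * ∮ z in C(0, q ^ 3), U z * deriv V z / (V z - w)
  have hs3 : sphere (0 : ℂ) (q ^ 3) ⊆ ball 0 1 := sphere_subset_closedBall.trans hq3
  have hV'c : ContinuousOn (deriv V) (sphere 0 (q ^ 3)) :=
    (hV.deriv hDopen).continuousOn.mono hs3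
  have hVc : ContinuousOn V (sphere 0 (q ^ 3)) := hV.continuousOn.mono hs3
  have hUc : ContinuousOn U (sphere 0 (q ^ 3)) := hU.continuousOn.mono hs3
  have hg : DifferentiableOn ℂ g (ball 0 (Q ^ 4)) :=
    (differentiableOn_circleIntegral_div_sub (by positivity) (hUc.mul hV'c) hVc
      fun z hz => (hV3 z hz).le).const_mul _
  have hannulus : ∀ t₀ ∈ re ⁻¹' Ioo (-6 * c) (-5 * c), g (V (exp t₀)) = U (exp t₀) := by
    intro t₀ ht₀
    have hnorm : ‖exp t₀‖ = Real.exp t₀.re := norm_exp t₀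
    have ht₀5 : exp t₀ ∈ ball (0 : ℂ) (q ^ 5) := by
      rw [mem_ball_zero_iff, hnorm, ← hexp]
      exact Real.exp_lt_exp.2 (by push_cast; exact ht₀.2)
    have hw := mem_ball_zero_iff.1 (hV5 _ ht₀5)
    have hVw : ∀ z ∈ sphere (0 : ℂ) (q ^ 3), V z ≠ V (exp t₀) := fun z hz h => by
      have := hV3 z hz
      rw [h] at this
      linarith
    have hlower : Q ^ 6 ≤ ‖exp t₀ ^ k‖ := by
      rw [norm_pow, ← hpow, hnorm, ← hexp]
      exact pow_le_pow_left₀ (Real.exp_pos _).le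
        (Real.exp_le_exp.2 (by push_cast; exact ht₀.1.le)) k
    have hfib' : ∀ z ∈ closedBall (0 : ℂ) (q ^ 3), V z = V (exp t₀) →
        U z = U (exp t₀) ∧ deriv V z ≠ 0 := by
      intro z hz hVz
      have h1 := hclose z (hball 3 (by norm_num) hz)
      have h2 := hclose _ (hq5 ht₀5)
      have h3 : ‖exp t₀ ^ k‖ ≤ ‖z ^ k‖ + 2 * (η * Q ^ 9) := by
        have h4 : exp t₀ ^ k = z ^ k + ((V z - z ^ k) - (V (exp t₀) - exp t₀ ^ k)) := by
          rw [hVz]; ring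
        have h5 := norm_sub_le (V z - z ^ k) (V (exp t₀) - exp t₀ ^ k)
        rw [h4]
        refine (norm_add_le _ _).trans ?_
        linarith
      have h4 : q ^ 8 < ‖z‖ := by
        by_contra! h
        have h5 : ‖z ^ k‖ ≤ Q ^ 8 := by
          rw [norm_pow, ← hpow]
          exact pow_le_pow_left₀ (norm_nonneg _) h k
        have h6 : Q ^ 7 + 2 * (η * Q ^ 9) < Q ^ 6 := hlt 6 (by norm_num)
        have h7 : Q ^ 8 + 2 * (η * Q ^ 9) < Q ^ 7 := hlt 7 (by norm_num)
        linarith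
      have hz0 : z ≠ 0 := norm_pos_iff.1 ((pow_pos hq0 8).trans h4)
      have hre : log z ∈ re ⁻¹' Ioo (-8 * c) (-2 * c) := by
        simp only [mem_preimage, log_re]
        constructor
        · rw [Real.lt_log_iff_exp_lt (norm_pos_iff.2 hz0)]
          have := hexp 8
          push_cast at this
          rwa [this]
        · rw [Real.log_lt_iff_lt_exp (norm_pos_iff.2 hz0)]
          have := hexp 2
          push_cast at this
          rw [this]
          exact (mem_closedBall_zero_iff.1 hz).trans_lt
            (pow_lt_pow_right_of_lt_one₀ hq0 hq1 (by norm_num))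
      have hU' := hfib t₀ ht₀ _ hre
      have hd := hderiv _ hre
      rw [exp_log hz0] at hU' hd
      exact ⟨hU' hVz, hd⟩
    have hI1 := circleIntegral_sub_mul_deriv_div_sub_eq_zero hDopen (by positivity) hq3 hU hV
      hVw hfib'
    have hI2 := circleIntegral_deriv_div_sub_eq hDopen (pow_pos hq0 3) hs3 hV (k := k)
      (w := V (exp t₀))
      (fun z hz => (hclose3 z hz).trans_lt (by
        rw [hpow3 z hz]
        have h4 : Q ^ 4 + 2 * (η * Q ^ 9) < Q ^ 3 := hlt 3 (by norm_num)
        have := pow_pos hQ0 4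
        linarith))
      fun z hz => hw.trans (hV3 z hz)
    have hquot : ContinuousOn (fun z => deriv V z / (V z - V (exp t₀))) (sphere 0 (q ^ 3)) :=
      hV'c.div (hVc.sub continuousOn_const) fun z hz => sub_ne_zero.2 (hVw z hz)
    have hsplit : (∮ z in C(0, q ^ 3), U z * deriv V z / (V z - V (exp t₀))) =
        (∮ z in C(0, q ^ 3), (U z - U (exp t₀)) * deriv V z / (V z - V (exp t₀))) +
        ∮ z in C(0, q ^ 3), U (exp t₀) * (deriv V z / (V z - V (exp t₀))) := by
      rw [← circleIntegral.integral_add]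
      · exact circleIntegral.integral_congr (by positivity) fun z _ => by ring
      · simp only [mul_div_assoc]
        exact ContinuousOn.circleIntegrable (by positivity)
          ((hUc.sub continuousOn_const).mul hquot)
      · exact ContinuousOn.circleIntegrable (by positivity) (continuousOn_const.mul hquot)
    simp only [g]
    rw [hsplit, hI1, circleIntegral.integral_const_mul, hI2, zero_add, mul_comm (U _),
      inv_mul_cancel_left₀ hc0]
  have hfactor : EqOn U (fun z => g (V z)) (ball 0 (q ^ 5)) := by
    have hsub : ball (0 : ℂ) (q ^ 5) ⊆ ball 0 1 := hq5.trans (closedBall_subset_ball hq1)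
    have hp : ‖exp ((-5.5 * c : ℝ) : ℂ)‖ = Real.exp (-5.5 * c) := by rw [norm_exp, ofReal_re]
    have hmem : exp ((-5.5 * c : ℝ) : ℂ) ∈ ball (0 : ℂ) (q ^ 5) := by
      rw [mem_ball_zero_iff, hp, ← hexp]
      exact Real.exp_lt_exp.2 (by push_cast; linarith)
    refine ((hU.mono hsub).analyticOnNhd isOpen_ball).eqOn_of_preconnected_of_eventuallyEq
      ((hg.comp (hV.mono hsub) hV5).analyticOnNhd isOpen_ball)
      (convex_ball _ _).isPreconnected hmem ?_
    have hopen : {z : ℂ | ‖z‖ ∈ Ioo (Real.exp (-6 * c)) (Real.exp (-5 * c))} ∈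
        nhds (exp ((-5.5 * c : ℝ) : ℂ)) := by
      refine (isOpen_Ioo.preimage continuous_norm).mem_nhds ?_
      rw [mem_preimage, hp]
      exact ⟨Real.exp_lt_exp.2 (by linarith), Real.exp_lt_exp.2 (by linarith)⟩
    filter_upwards [hopen] with z hz
    have hz0 : 0 < ‖z‖ := (Real.exp_pos _).trans hz.1
    have h := hannulus (log z) (by
      simp only [mem_preimage, log_re]
      exact ⟨(Real.lt_log_iff_exp_lt hz0).2 hz.1, (Real.log_lt_iff_lt_exp hz0).2 hz.2⟩)
    rw [exp_log (norm_pos_iff.1 hz0)] at h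
    exact h.symm
  have hreal_values : ∀ x ∈ Ioo (-7 * c) (-5.5 * c),
      ((Real.exp (k * x) : ℝ) : ℂ) ∈ ball (0 : ℂ) (Q ^ 4) ∧
        (g (Real.exp (k * x) : ℝ)).im = 0 := by
    intro x hx
    obtain ⟨t, ht, hVt⟩ := hvalues x hx
    have hmem : exp t ∈ ball (0 : ℂ) (q ^ 5) := by
      rw [mem_ball_zero_iff, norm_exp, ← hexp]
      exact Real.exp_lt_exp.2 (by push_cast; exact ht)
    rw [← hVt]
    refine ⟨hV5 _ hmem, ?_⟩
    have hfac : U (exp t) = g (V (exp t)) := hfactor hmem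
    rw [← hfac]
    refine hreal _ ((hq5.trans (closedBall_subset_ball hq1)) hmem) ?_
    rw [hVt, ofReal_im]
  refine ⟨Q ^ 4, g, by positivity, image_subset_iff.2 hV5, hg, fun x hx => ?_, hfactor⟩
  have hmid : -6 * c ∈ Ioo (-7 * c) (-5.5 * c) := ⟨by linarith, by linarith⟩
  have h := apply_conj_eq_conj_of_eventually_real (x₀ := Real.exp (k * (-6 * c))) isOpen_ball
    (convex_ball _ _).isPreconnected (fun z hz => by simpa using hz) hg (hreal_values _ hmid).1 ?_ hx
  · rw [conj_ofReal] at h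
    exact conj_eq_iff_im.1 h.symm
  · have hkR : (k : ℝ) ≠ 0 := Nat.cast_ne_zero.2 hk.ne'
    have hlog : ContinuousAt (fun y => Real.log y / k) (Real.exp (k * (-6 * c))) :=
      (Real.continuousAt_log (Real.exp_pos _).ne').div_const _
    have hnear : Ioo (-7 * c) (-5.5 * c) ∈ nhds (Real.log (Real.exp (k * (-6 * c))) / k) := by
      rw [Real.log_exp, mul_div_cancel_left₀ _ hkR]
      exact isOpen_Ioo.mem_nhds hmid
    filter_upwards [hlog hnear, lt_mem_nhds (Real.exp_pos (k * (-6 * c)))] with y hy hy0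
    have h := (hreal_values _ hy).2
    rwa [mul_div_cancel₀ _ hkR, Real.exp_log hy0] at h

theorem stmt7 (U V : ℕ → ℂ → ℂ) (k : ℕ) (hk : 0 < k)
    (hU : ∀ n, DifferentiableOn ℂ (U n) (ball (0 : ℂ) 1))
    (hV : ∀ n, DifferentiableOn ℂ (V n) (ball (0 : ℂ) 1))
    (hz : ∀ n, {z ∈ ball (0 : ℂ) 1 | (U n z).im = 0} =
               {z ∈ ball (0 : ℂ) 1 | (V n z).im = 0})
    (hconv : ∀ K : Set ℂ, K ⊆ ball (0 : ℂ) 1 → IsCompact K →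
      TendstoUniformlyOn (fun n z => V n z) (fun z => z ^ k) atTop K) :
    ∀ ρ : ℝ, ρ < 1 → ∃ n₀ : ℕ, ∀ n > n₀,
      ∃ (s : ℝ) (g : ℂ → ℂ), 0 < s ∧
        V n '' ball (0 : ℂ) ρ ⊆ ball (0 : ℂ) s ∧
        DifferentiableOn ℂ g (ball (0 : ℂ) s) ∧
        (∀ x : ℝ, (x : ℂ) ∈ ball (0 : ℂ) s → (g x).im = 0) ∧
        ∀ z ∈ ball (0 : ℂ) ρ, U n z = g (V n z) := by
  intro ρ hρ
  have hr0 : 0 < max ρ (1 / 2) := lt_max_of_lt_right (by norm_num)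
  have hr1 : max ρ (1 / 2) < 1 := max_lt hρ (by norm_num)
  have hc : 0 < -Real.log (max ρ (1 / 2)) / 5 := by
    have := Real.log_neg hr0 hr1
    linarith
  set c := -Real.log (max ρ (1 / 2)) / 5 with hc_def
  set q := Real.exp (-c) with hq
  have hq1 : q < 1 := by rw [hq, Real.exp_lt_one_iff]; linarith
  have hq5 : q ^ 5 = max ρ (1 / 2) := by
    rw [hq, ← Real.exp_nat_mul, hc_def]
    push_cast
    rw [show 5 * -(-Real.log (max ρ (1 / 2)) / 5) = Real.log (max ρ (1 / 2)) by ring,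
      Real.exp_log hr0]
  have hball : ball (0 : ℂ) ρ ⊆ ball 0 (q ^ 5) := ball_subset_ball (hq5 ▸ le_max_left _ _)
  have hε : 0 < (1 - q) / 8 * (q ^ k) ^ 9 :=
    mul_pos (by linarith) (pow_pos (pow_pos (Real.exp_pos _) _) _)
  obtain ⟨n₀, hn₀⟩ := eventually_atTop.1 (Metric.tendstoUniformlyOn_iff.1
    (hconv (closedBall 0 q) (closedBall_subset_ball hq1) (isCompact_closedBall _ _)) _ hε)
  refine ⟨n₀, fun n hn => ?_⟩
  obtain ⟨s, g, hs, hVs, hg, hgreal, hUg⟩ := exists_factorization_of_close hk hc hq rfl rfl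
    (hU n) (hV n) (fun z hzb hzV => ((hz n).symm.subset ⟨hzb, hzV⟩).2)
    fun z hzq => by
      have := (hn₀ n hn.le z hzq).le
      rwa [dist_comm, dist_eq_norm] at this
  exact ⟨s, g, hs, (image_mono hball).trans hVs, hg, hgreal, fun z hzρ => hUg z (hball hzρ)⟩
end
end

section
/- Let (u_n) and (v_n) be sequences of harmonic functions on the open unit disc 𝔻 ⊂ ℝ² such that for each n: Z(u_n) = Z(v_n) and u_n(x)·v_n(x) > 0 for every x ∈ 𝔻 ∖ Z(u_n). Suppose u_n converges to u and v_n converges to v uniformly on compact subsets of 𝔻, where u and v are harmonic on 𝔻 and neither is identically zero. Then for every compact set K ⊂ 𝔻 there is a constant C such that for every n, sup_{x ∈ K ∖ Z(u_n)} u_n(x)/v_n(x) ≤ C · inf_{x ∈ K ∖ Z(u_n)} u_n(x)/v_n(x). -/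
open Metric Set Filter

noncomputable section

open scoped Topology

/-- The linear isometry between `ℂ` and the Euclidean plane. -/
def planeIso : ℂ ≃ₗᵢ[ℝ] En 2 := Complex.orthonormalBasisOneI.repr

lemma planeIso_mem_ball {z : ℂ} {r : ℝ} : planeIso z ∈ ball (0 : En 2) r ↔ z ∈ ball (0 : ℂ) r := by
  simp

lemma laplacian_comp_planeIso (u : En 2 → ℝ) (z : ℂ) :
    Laplacian.laplacian (u ∘ planeIso) z = laplacianAt u (planeIso z) := by
  rw [InnerProductSpace.laplacian_eq_iteratedFDeriv_orthonormalBasis _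
    ((EuclideanSpace.basisFun (Fin 2) ℝ).map planeIso.symm), laplacianAt]
  refine Finset.sum_congr rfl fun i _ => ?_
  have h := planeIso.toContinuousLinearEquiv.iteratedFDerivWithin_comp_right (𝕜 := ℝ) u
    uniqueDiffOn_univ (mem_univ (planeIso z)) 2
  rw [preimage_univ, iteratedFDerivWithin_univ, iteratedFDerivWithin_univ] at h
  have h' : (u ∘ planeIso.toContinuousLinearEquiv) = u ∘ planeIso := rfl
  rw [h'] at h
  rw [h, ContinuousMultilinearMap.compContinuousLinearMap_apply]
  congr 1
  ext j : 1
  fin_cases j <;> simp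

lemma HarmonicOnSet.comp_planeIso {u : En 2 → ℝ} {r : ℝ} (hu : HarmonicOnSet u (ball 0 r)) :
    InnerProductSpace.HarmonicOnNhd (u ∘ planeIso) (ball 0 r) := by
  intro z hz
  refine ⟨?_, ?_⟩
  · have h := hu.1.contDiffAt (isOpen_ball.mem_nhds (planeIso_mem_ball.2 hz))
    exact h.comp z planeIso.contDiff.contDiffAt
  · filter_upwards [isOpen_ball.mem_nhds hz] with w hw
    rw [laplacian_comp_planeIso, hu.2 _ (planeIso_mem_ball.2 hw)]
    rfl

/-- A harmonic function on a disc is the real part of a holomorphic function which is real at the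
centre. -/
lemma HarmonicOnSet.exists_holomorphic {u : En 2 → ℝ} {r : ℝ} (hu : HarmonicOnSet u (ball 0 r)) :
    ∃ F : ℂ → ℂ, DifferentiableOn ℂ F (ball 0 r) ∧ (F 0).im = 0 ∧
      ∀ z ∈ ball (0 : ℂ) r, (F z).re = u (planeIso z) := by
  obtain ⟨F, hF, hre⟩ := hu.comp_planeIso.exists_analyticOnNhd_ball_re_eq
  refine ⟨fun z => F z - (F 0).im * Complex.I, hF.differentiableOn.sub_const _, by simp,
    fun z hz => ?_⟩
  simpa using hre hz

/-- Locally uniform convergence of real parts implies locally uniform convergence. -/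
lemma tendstoLocallyUniformlyOn_of_re {F : ℕ → ℂ → ℂ} {f : ℂ → ℂ} {r : ℝ} (hr : 0 < r)
    (hF : ∀ m, DifferentiableOn ℂ (F m) (ball 0 r)) (hf : DifferentiableOn ℂ f (ball 0 r))
    (h0 : ∀ m, (F m 0).im = (f 0).im)
    (h : ∀ t < r, TendstoUniformlyOn (fun m z => (F m z).re) (fun z => (f z).re) atTop
      (closedBall 0 t)) :
    TendstoLocallyUniformlyOn F f atTop (ball 0 r) := by
  rw [tendstoLocallyUniformlyOn_iff_forall_isCompact isOpen_ball]
  intro K hK hKc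
  obtain ⟨s, ⟨hs0, hsr⟩, hKs⟩ := exists_pos_lt_subset_ball hr hKc.isClosed hK
  obtain ⟨t, hst, htr⟩ := exists_between hsr
  have hts : 0 < t - s := sub_pos.2 hst
  have ht0 : 0 < t := hs0.trans hst
  rw [Metric.tendstoUniformlyOn_iff]
  intro ε hε
  set δ := ε * (t - s) / (8 * t) with hδ
  have hδ0 : 0 < δ := by positivity
  filter_upwards [Metric.tendstoUniformlyOn_iff.1 (h t htr) δ hδ0] with m hm z hz
  have hzs : ‖z‖ < s := by simpa using hKs hz
  have hsub : ball (0 : ℂ) t ⊆ ball 0 r := ball_subset_ball htr.le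
  have hbd : ∀ w ∈ closedBall (0 : ℂ) t, |(F m w - f w).re| ≤ δ := fun w hw => by
    have := (hm w hw).le
    rwa [dist_comm, Real.dist_eq, ← Complex.sub_re] at this
  have h00 : ‖F m 0 - f 0‖ ≤ δ := by
    have him : (F m 0 - f 0).im = 0 := by simp [h0]
    rw [← Complex.abs_re_eq_norm.2 him]
    exact hbd 0 (by simp [ht0.le])
  have key := Complex.borelCaratheodory (f := fun w => F m w - f w) (R := t) (z := z) hδ0
    (((hF m).mono hsub).sub (hf.mono hsub))
    (fun w hw => (le_abs_self _).trans (hbd w (ball_subset_closedBall hw))) ht0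
    (by simpa using hzs.trans hst)
  rw [dist_comm, dist_eq_norm]
  refine key.trans_lt ?_
  have htz : t - s ≤ t - ‖z‖ := by linarith
  calc 2 * δ * ‖z‖ / (t - ‖z‖) + ‖F m 0 - f 0‖ * (t + ‖z‖) / (t - ‖z‖)
      ≤ 2 * δ * t / (t - s) + δ * (t + t) / (t - s) := by
        have : ‖z‖ ≤ t := by linarith
        gcongr
    _ = ε / 2 := by rw [hδ]; field_simp; ring
    _ < ε := by linarith

lemma TendstoLocallyUniformlyOn.tendsto_uncurry {F : ℕ → ℂ → ℂ} {f : ℂ → ℂ} {Ω : Set ℂ}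
    (h : TendstoLocallyUniformlyOn F f atTop Ω) (hΩ : IsOpen Ω) (hf : ContinuousOn f Ω) {q : ℂ}
    (hq : q ∈ Ω) :
    Tendsto (fun p : ℕ × ℂ => F p.1 p.2) (atTop ×ˢ 𝓝 q) (𝓝 (f q)) := by
  refine tendsto_comp_of_locally_uniform_limit (F := fun p : ℕ × ℂ => F p.1)
    (hf.continuousAt (hΩ.mem_nhds hq)) tendsto_snd fun V hV => ?_
  obtain ⟨t, ht, H⟩ := h V hV q hq
  rw [hΩ.nhdsWithin_eq hq] at ht
  exact ⟨t, ht, tendsto_fst.eventually H⟩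

/-- If `G m → g` and `Re g` has a regular zero at `q`, then near `q` a convergent sequence of real
parts vanishing on the zero sets of `Re (G m)` is controlled by `Re (G m)`. -/
lemma eventually_abs_re_le_of_deriv_ne_zero {F G : ℕ → ℂ → ℂ} {f g : ℂ → ℂ} {Ω : Set ℂ}
    (hΩ : IsOpen Ω) (hF : ∀ m, DifferentiableOn ℂ (F m) Ω) (hG : ∀ m, DifferentiableOn ℂ (G m) Ω)
    (hFf : TendstoLocallyUniformlyOn F f atTop Ω) (hGg : TendstoLocallyUniformlyOn G g atTop Ω)
    (hz : ∀ m, ∀ z ∈ Ω, (G m z).re = 0 → (F m z).re = 0) {q : ℂ} (hq : q ∈ Ω)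
    (hgq : (g q).re = 0) (hg' : deriv g q ≠ 0) :
    ∃ C, 0 ≤ C ∧ ∀ᶠ p : ℕ × ℂ in atTop ×ˢ 𝓝 q, |(F p.1 p.2).re| ≤ C * |(G p.1 p.2).re| := by
  have hf := hFf.differentiableOn (Eventually.of_forall hF) hΩ
  have hg := hGg.differentiableOn (Eventually.of_forall hG) hΩ
  have tF' := (hFf.deriv (Eventually.of_forall hF) hΩ).tendsto_uncurry hΩ
    (hf.deriv hΩ).continuousOn hq
  have tG' := (hGg.deriv (Eventually.of_forall hG) hΩ).tendsto_uncurry hΩ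
    (hg.deriv hΩ).continuousOn hq
  have tG := hGg.tendsto_uncurry hΩ hg.continuousOn hq
  have hn : 0 < ‖deriv g q‖ := norm_pos_iff.2 hg'
  set e : ℂ := (starRingEnd ℂ) (deriv g q) / ‖deriv g q‖ with he
  have hen : ‖e‖ = 1 := by simp [he, hn.ne']
  have hge : (deriv g q * e).re = ‖deriv g q‖ := by
    have : deriv g q * e = ((‖deriv g q‖ : ℝ) : ℂ) := by
      rw [he, mul_div_assoc', Complex.mul_conj, Complex.normSq_eq_norm_sq]
      have : ((‖deriv g q‖ : ℝ) : ℂ) ≠ 0 := by exact_mod_cast hn.ne'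
      push_cast
      field_simp
    rw [this, Complex.ofReal_re]
  set c := ‖deriv g q‖ / 2 with hc
  have hc0 : 0 < c := by positivity
  set M := ‖deriv f q‖ + 1 with hM
  have e1 : ∀ᶠ p : ℕ × ℂ in atTop ×ˢ 𝓝 q, ‖deriv (F p.1) p.2‖ < M :=
    tF'.norm.eventually_lt_const (by simp [hM])
  have e2 : ∀ᶠ p : ℕ × ℂ in atTop ×ˢ 𝓝 q, c < (deriv (G p.1) p.2 * e).re :=
    ((Complex.continuous_re.tendsto _).comp (tG'.mul_const e)).eventually_const_lt
      (by rw [hge, hc]; linarith)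
  have e3 : ∀ᶠ p : ℕ × ℂ in atTop ×ˢ 𝓝 q, p.2 ∈ Ω := tendsto_snd.eventually (hΩ.mem_nhds hq)
  obtain ⟨A, hA, B, hB, hAB⟩ := eventually_prod_iff.1 ((e1.and e2).and e3)
  obtain ⟨ρ, hρ, hρB⟩ := Metric.eventually_nhds_iff_ball.1 hB
  have e4 : ∀ᶠ p : ℕ × ℂ in atTop ×ˢ 𝓝 q, |(G p.1 p.2).re| < c * (ρ / 2) := by
    have := ((Complex.continuous_re.tendsto _).comp tG).abs
    rw [hgq, abs_zero] at this
    exact this.eventually_lt_const (by positivity)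
  refine ⟨M / c, by positivity, ?_⟩
  filter_upwards [e4, tendsto_fst.eventually hA, tendsto_snd.eventually
    (ball_mem_nhds q (half_pos hρ))] with ⟨m, z⟩ h4 hm hzq
  simp only at h4 hm hzq ⊢
  have hball : ∀ t ∈ Icc (-(ρ / 2)) (ρ / 2), z + t * e ∈ ball q ρ := fun t ht => by
    have : ‖(t : ℂ) * e‖ ≤ ρ / 2 := by
      simpa [hen] using abs_le.2 ht
    rw [dist_eq_norm] at hzq
    rw [mem_ball, dist_eq_norm]
    calc ‖z + t * e - q‖ = ‖(z - q) + t * e‖ := by congr 1; ring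
      _ ≤ ‖z - q‖ + ‖t * e‖ := norm_add_le _ _
      _ < ρ := by linarith
  have hm' : ∀ w ∈ ball q ρ, (‖deriv (F m) w‖ < M ∧ c < (deriv (G m) w * e).re) ∧ w ∈ Ω :=
    fun w hw => hAB hm (hρB w hw)
  set φ : ℝ → ℝ := fun t => (G m (z + t * e)).re with hφ
  have hderiv : ∀ t ∈ Icc (-(ρ / 2)) (ρ / 2),
      HasDerivAt φ (deriv (G m) (z + t * e) * e).re t := fun t ht => by
    have h1 : HasDerivAt (G m) (deriv (G m) (z + t * e)) (z + t * e) :=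
      ((hG m).differentiableAt (hΩ.mem_nhds (hm' _ (hball t ht)).2)).hasDerivAt
    have h2 : HasDerivAt (fun w : ℂ => z + w * e) e (t : ℂ) := by
      simpa using ((hasDerivAt_id (t : ℂ)).mul_const e).const_add z
    exact (h1.comp (t : ℂ) h2).real_of_complex
  have hcont : ContinuousOn φ (Icc (-(ρ / 2)) (ρ / 2)) := fun t ht =>
    (hderiv t ht).continuousAt.continuousWithinAt
  have hlow : ∀ x ∈ Icc (-(ρ / 2)) (ρ / 2), ∀ y ∈ Icc (-(ρ / 2)) (ρ / 2), x ≤ y →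
      c * (y - x) ≤ φ y - φ x := by
    refine (convex_Icc _ _).mul_sub_le_image_sub_of_le_deriv hcont ?_ ?_
    · exact fun t ht => (hderiv t (interior_subset ht)).differentiableAt.differentiableWithinAt
    · intro t ht
      rw [(hderiv t (interior_subset ht)).deriv]
      exact (hm' _ (hball t (interior_subset ht))).1.2.le
  have hl : -(ρ / 2) ∈ Icc (-(ρ / 2)) (ρ / 2) := ⟨le_rfl, by linarith⟩
  have hr : ρ / 2 ∈ Icc (-(ρ / 2)) (ρ / 2) := ⟨by linarith, le_rfl⟩
  have h0 : (0 : ℝ) ∈ Icc (-(ρ / 2)) (ρ / 2) := ⟨by linarith, by linarith⟩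
  have hφ0 : φ 0 = (G m z).re := by simp [hφ]
  rw [abs_lt, ← hφ0] at h4
  have hroot : (0 : ℝ) ∈ Icc (φ (-(ρ / 2))) (φ (ρ / 2)) := by
    have a1 := hlow _ hl _ h0 (by linarith)
    have a2 := hlow _ h0 _ hr (by linarith)
    constructor <;> linarith [h4.1, h4.2]
  obtain ⟨t, ht, htφ⟩ := intermediate_value_Icc (by linarith) hcont hroot
  have hFt : (F m (z + t * e)).re = 0 := hz m _ (hm' _ (hball t ht)).2 htφ
  have hlower : c * |t| ≤ |(G m z).re| := by
    rw [← hφ0]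
    rcases le_total 0 t with h | h
    · have := hlow _ h0 _ ht h
      rw [abs_of_nonneg h]
      linarith [neg_le_abs (φ 0)]
    · have := hlow _ ht _ h0 h
      rw [abs_of_nonpos h]
      linarith [le_abs_self (φ 0)]
  have hupper : |(F m z).re| ≤ M * |t| := by
    have hmv := (convex_ball q ρ).norm_image_sub_le_of_norm_deriv_le (𝕜 := ℂ) (f := F m) (C := M)
      (fun w hw => (hF m).differentiableAt (hΩ.mem_nhds (hm' w hw).2))
      (fun w hw => (hm' w hw).1.1.le) (hball t ht) (ball_subset_ball (by linarith) hzq)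
    calc |(F m z).re| = |(F m z - F m (z + t * e)).re| := by rw [Complex.sub_re, hFt, sub_zero]
      _ ≤ ‖F m z - F m (z + t * e)‖ := Complex.abs_re_le_norm _
      _ ≤ M * ‖z - (z + t * e)‖ := hmv
      _ = M * |t| := by simp [hen]
  calc |(F m z).re| ≤ M * |t| := hupper
    _ = M / c * (c * |t|) := by field_simp
    _ ≤ M / c * |(G m z).re| := by gcongr

lemma eventually_abs_re_le_of_re_ne_zero {F G : ℕ → ℂ → ℂ} {f g : ℂ → ℂ} {Ω : Set ℂ}
    (hΩ : IsOpen Ω) (hf : ContinuousOn f Ω) (hg : ContinuousOn g Ω)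
    (hFf : TendstoLocallyUniformlyOn F f atTop Ω) (hGg : TendstoLocallyUniformlyOn G g atTop Ω)
    {q : ℂ} (hq : q ∈ Ω) (hgq : (g q).re ≠ 0) :
    ∃ C, 0 ≤ C ∧ ∀ᶠ p : ℕ × ℂ in atTop ×ˢ 𝓝 q, |(F p.1 p.2).re| ≤ C * |(G p.1 p.2).re| := by
  have tF := ((Complex.continuous_re.tendsto _).comp (hFf.tendsto_uncurry hΩ hf hq)).abs
  have tG := ((Complex.continuous_re.tendsto _).comp (hGg.tendsto_uncurry hΩ hg hq)).abs
  have ha : 0 < |(g q).re| := abs_pos.2 hgq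
  set a := |(g q).re|
  set M := |(f q).re| + 1 with hM
  refine ⟨M / (a / 2), by positivity, ?_⟩
  filter_upwards [tF.eventually_lt_const (show _ < M by simp [hM]),
    tG.eventually_const_lt (half_lt_self ha)] with p h1 h2
  simp only [Function.comp_apply] at h1 h2
  calc |(F p.1 p.2).re| ≤ M := h1.le
    _ = M / (a / 2) * (a / 2) := by field_simp
    _ ≤ M / (a / 2) * |(G p.1 p.2).re| := by gcongr

/-- Maximum principle for the quotient `Re F / Re G` on a nodal domain `{Re G > 0}`. -/
lemma re_le_of_forall_mem_sphere {F G : ℂ → ℂ} {R C : ℝ}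
    (hF : DiffContOnCl ℂ F (ball 0 R)) (hG : DiffContOnCl ℂ G (ball 0 R))
    (hz : ∀ z ∈ ball (0 : ℂ) R, (G z).re = 0 → (F z).re = 0)
    (hC : ∀ z ∈ sphere (0 : ℂ) R, |(F z).re| ≤ C * |(G z).re|) {z : ℂ} (hzR : z ∈ ball (0 : ℂ) R)
    (hpos : 0 < (G z).re) : (F z).re ≤ C * (G z).re := by
  set W : Set ℂ := ball 0 R ∩ {w | 0 < (G w).re} with hW
  have hWo : IsOpen W := by
    refine (Complex.continuous_re.comp_continuousOn
      hG.differentiableOn.continuousOn).isOpen_inter_preimage isOpen_ball isOpen_Ioi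
  have hWb : W ⊆ ball 0 R := inter_subset_left
  have hd : DiffContOnCl ℂ (fun w => Complex.exp (F w - C * G w)) W := by
    have : DiffContOnCl ℂ (fun w => F w - (C : ℂ) • G w) W :=
      (hF.sub (hG.const_smul (C : ℂ))).mono hWb
    exact Complex.differentiable_exp.comp_diffContOnCl this
  have hR : R ≠ 0 := by rintro rfl; simp at hzR
  have hfr : ∀ w ∈ frontier W, ‖Complex.exp (F w - C * G w)‖ ≤ 1 := by
    intro w hw
    rw [hWo.frontier_eq] at hw
    have hwc : w ∈ closedBall (0 : ℂ) R :=
      closure_ball_subset_closedBall (closure_mono hWb hw.1)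
    have hGw : 0 ≤ (G w).re := by
      have hcw : ContinuousWithinAt (fun w => (G w).re) W w :=
        Complex.continuous_re.continuousAt.comp_continuousWithinAt
          ((hG.continuousOn w (closure_mono hWb hw.1)).mono (hWb.trans subset_closure))
      have := hcw.mem_closure_image hw.1
      have h2 : (fun w => (G w).re) '' W ⊆ Ici 0 := by
        rintro _ ⟨y, hy, rfl⟩
        have h3 : 0 < (G y).re := by simpa using hy.2
        exact h3.le
      exact (closure_minimal h2 isClosed_Ici) this
    suffices (F w).re ≤ C * (G w).re by
      rw [Complex.norm_exp, Real.exp_le_one_iff]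
      simpa using this
    by_cases hwR : w ∈ ball (0 : ℂ) R
    · have hG0 : (G w).re = 0 :=
        le_antisymm (not_lt.1 fun h => hw.2 ⟨hwR, h⟩) hGw
      rw [hG0, hz w hwR hG0, mul_zero]
    · have hs : w ∈ sphere (0 : ℂ) R := by
        simp only [mem_closedBall, mem_ball, mem_sphere, not_lt] at hwc hwR ⊢
        exact le_antisymm hwc hwR
      have := hC w hs
      rw [abs_of_nonneg hGw] at this
      exact (le_abs_self _).trans this
  have := Complex.norm_le_of_forall_mem_frontier_norm_le (isBounded_ball.subset hWb) hd hfr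
    (subset_closure ⟨hzR, hpos⟩)
  rw [Complex.norm_exp, Real.exp_le_one_iff] at this
  simpa using this

lemma abs_re_le_of_forall_mem_sphere {F G : ℂ → ℂ} {R C : ℝ}
    (hF : DiffContOnCl ℂ F (ball 0 R)) (hG : DiffContOnCl ℂ G (ball 0 R))
    (hz : ∀ z ∈ ball (0 : ℂ) R, (G z).re = 0 → (F z).re = 0)
    (hsign : ∀ z ∈ ball (0 : ℂ) R, 0 ≤ (F z).re * (G z).re)
    (hC : ∀ z ∈ sphere (0 : ℂ) R, |(F z).re| ≤ C * |(G z).re|) {z : ℂ}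
    (hzR : z ∈ ball (0 : ℂ) R) : |(F z).re| ≤ C * |(G z).re| := by
  rcases lt_trichotomy (G z).re 0 with h | h | h
  · have hFz : (F z).re ≤ 0 := by nlinarith [hsign z hzR]
    have := re_le_of_forall_mem_sphere hF.neg hG.neg (C := C) (by simpa using hz)
      (by simpa using hC) hzR (by simpa using h)
    rw [abs_of_nonpos hFz, abs_of_neg h]
    simpa using this
  · rw [h, hz z hzR h]
    simp
  · have hFz : 0 ≤ (F z).re := by nlinarith [hsign z hzR]
    rw [abs_of_nonneg hFz, abs_of_pos h]
    exact re_le_of_forall_mem_sphere hF hG hz hC hzR h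

/-- Arbitrarily large circles in a disc avoid the critical zeros of `Re g`. -/
lemma exists_radius_deriv_ne_zero {g : ℂ → ℂ} {r s : ℝ} (hg : DifferentiableOn ℂ g (ball 0 r))
    (hne : ∃ z ∈ ball (0 : ℂ) r, (g z).re ≠ 0) (hsr : s < r) :
    ∃ R ∈ Ioo s r, ∀ z ∈ sphere (0 : ℂ) R, (g z).re = 0 → deriv g z ≠ 0 := by
  by_contra! hcon
  obtain ⟨t, hst, htr⟩ := exists_between hsr
  set S : Set ℂ := {z ∈ closedBall (0 : ℂ) t | (g z).re = 0 ∧ deriv g z = 0} with hS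
  have hsub : Ioo s t ⊆ norm '' S := by
    intro R hR
    obtain ⟨z, hz, h1, h2⟩ := hcon R ⟨hR.1, hR.2.trans htr⟩
    have hzR : ‖z‖ = R := by simpa using hz
    exact ⟨z, ⟨by simpa [hzR] using hR.2.le, h1, h2⟩, hzR⟩
  have hinf : S.Infinite := ((Ioo_infinite hst).mono hsub).of_image _
  obtain ⟨x, hx, hacc⟩ := hinf.exists_accPt_of_subset_isCompact (isCompact_closedBall 0 t)
    (sep_subset _ _)
  have hconn : IsPreconnected (ball (0 : ℂ) r) := (convex_ball 0 r).isPreconnected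
  have hzero := ((hg.deriv isOpen_ball).analyticOnNhd
    isOpen_ball).eqOn_zero_of_preconnected_of_frequently_eq_zero hconn
    (closedBall_subset_ball htr hx) ((accPt_iff_frequently_nhdsNE.1 hacc).mono fun y hy => hy.2.2)
  obtain ⟨a, ha⟩ := isOpen_ball.exists_is_const_of_deriv_eq_zero hconn hg hzero
  obtain ⟨y, hy⟩ := hinf.nonempty
  obtain ⟨z, hz, hzne⟩ := hne
  exact hzne (by rw [ha z hz, ← ha y (closedBall_subset_ball htr hy.1), hy.2.1])

lemma eventually_abs_re_le {F G : ℕ → ℂ → ℂ} {f g : ℂ → ℂ} {r : ℝ}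
    (hF : ∀ m, DifferentiableOn ℂ (F m) (ball 0 r)) (hG : ∀ m, DifferentiableOn ℂ (G m) (ball 0 r))
    (hFf : TendstoLocallyUniformlyOn F f atTop (ball 0 r))
    (hGg : TendstoLocallyUniformlyOn G g atTop (ball 0 r))
    (hz : ∀ m, ∀ z ∈ ball (0 : ℂ) r, (G m z).re = 0 → (F m z).re = 0)
    (hsign : ∀ m, ∀ z ∈ ball (0 : ℂ) r, 0 ≤ (F m z).re * (G m z).re)
    (hne : ∃ z ∈ ball (0 : ℂ) r, (g z).re ≠ 0) {s : ℝ} (hsr : s < r) :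
    ∃ C, 0 ≤ C ∧ ∀ᶠ m in atTop, ∀ z ∈ ball (0 : ℂ) s, |(F m z).re| ≤ C * |(G m z).re| := by
  have hf := hFf.differentiableOn (Eventually.of_forall hF) isOpen_ball
  have hg := hGg.differentiableOn (Eventually.of_forall hG) isOpen_ball
  obtain ⟨R, ⟨hsR, hRr⟩, hR⟩ := exists_radius_deriv_ne_zero hg hne hsr
  have hcb : closedBall (0 : ℂ) R ⊆ ball 0 r := closedBall_subset_ball hRr
  have hsphere : ∃ C, 0 ≤ C ∧ ∀ᶠ m in atTop, ∀ z ∈ sphere (0 : ℂ) R,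
      |(F m z).re| ≤ C * |(G m z).re| := by
    refine (isCompact_sphere (0 : ℂ) R).induction_on
      (p := fun T => ∃ C, 0 ≤ C ∧ ∀ᶠ m in atTop, ∀ z ∈ T, |(F m z).re| ≤ C * |(G m z).re|)
      ⟨0, le_rfl, by simp⟩ ?_ ?_ ?_
    · rintro S T hST ⟨C, hC, h⟩
      exact ⟨C, hC, h.mono fun m hm z hzS => hm z (hST hzS)⟩
    · rintro S T ⟨C, hC, h⟩ ⟨D, hD, h'⟩
      refine ⟨max C D, le_max_of_le_left hC, ?_⟩
      filter_upwards [h, h'] with m hm hm' z hzST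
      rcases hzST with hzS | hzT
      · exact (hm z hzS).trans (by gcongr; exact le_max_left _ _)
      · exact (hm' z hzT).trans (by gcongr; exact le_max_right _ _)
    · intro q hq
      have hqr : q ∈ ball (0 : ℂ) r := hcb (sphere_subset_closedBall hq)
      obtain ⟨C, hC, h⟩ : ∃ C, 0 ≤ C ∧ ∀ᶠ p : ℕ × ℂ in atTop ×ˢ 𝓝 q,
          |(F p.1 p.2).re| ≤ C * |(G p.1 p.2).re| := by
        by_cases hgq : (g q).re = 0
        · exact eventually_abs_re_le_of_deriv_ne_zero isOpen_ball hF hG hFf hGg hz hqr hgq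
            (hR q hq hgq)
        · exact eventually_abs_re_le_of_re_ne_zero isOpen_ball hf.continuousOn hg.continuousOn
            hFf hGg hqr hgq
      obtain ⟨A, hA, B, hB, hAB⟩ := eventually_prod_iff.1 h
      exact ⟨{z | B z}, mem_nhdsWithin_of_mem_nhds hB, C, hC, hA.mono fun m hm z hzB => hAB hm hzB⟩
  obtain ⟨C, hC, h⟩ := hsphere
  refine ⟨C, hC, h.mono fun m hm z hzs => ?_⟩
  have hdc : ∀ {H : ℂ → ℂ}, DifferentiableOn ℂ H (ball 0 r) → DiffContOnCl ℂ H (ball 0 R) :=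
    fun hH => (hH.mono (closure_ball_subset_closedBall.trans hcb)).diffContOnCl
  have hbb : ball (0 : ℂ) R ⊆ ball 0 r := ball_subset_ball hRr.le
  exact abs_re_le_of_forall_mem_sphere (hdc (hF m)) (hdc (hG m)) (fun z hz' => hz m z (hbb hz'))
    (fun z hz' => hsign m z (hbb hz')) hm (ball_subset_ball hsR.le hzs)

/-- If harmonic functions `u m` and `v m` share zeros and signs, and converge with the limit of
`v m` nonzero, then `|u m| ≤ C |v m|` on smaller discs for large `m`. -/
lemma eventually_abs_le_of_harmonic {u v : ℕ → En 2 → ℝ} {U V : En 2 → ℝ} {r : ℝ} (hr : 0 < r)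
    (hu : ∀ m, HarmonicOnSet (u m) (ball 0 r)) (hv : ∀ m, HarmonicOnSet (v m) (ball 0 r))
    (hz : ∀ m, ∀ x ∈ ball (0 : En 2) r, v m x = 0 → u m x = 0)
    (hsign : ∀ m, ∀ x ∈ ball (0 : En 2) r, 0 ≤ u m x * v m x)
    (hU : HarmonicOnSet U (ball 0 r)) (hV : HarmonicOnSet V (ball 0 r))
    (hVne : ∃ x ∈ ball (0 : En 2) r, V x ≠ 0)
    (hconvU : ∀ K : Set (En 2), K ⊆ ball (0 : En 2) r → IsCompact K →
      TendstoUniformlyOn u U atTop K)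
    (hconvV : ∀ K : Set (En 2), K ⊆ ball (0 : En 2) r → IsCompact K →
      TendstoUniformlyOn v V atTop K) {K : Set (En 2)} (hK : IsCompact K)
    (hKr : K ⊆ ball (0 : En 2) r) :
    ∃ C, 0 ≤ C ∧ ∀ᶠ m in atTop, ∀ x ∈ K, |u m x| ≤ C * |v m x| := by
  choose F hF hF0 hFu using fun m => (hu m).exists_holomorphic
  choose G hG hG0 hGv using fun m => (hv m).exists_holomorphic
  obtain ⟨f, hf, hf0, hfU⟩ := hU.exists_holomorphic
  obtain ⟨g, hg, hg0, hgV⟩ := hV.exists_holomorphic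
  have hconv : ∀ {w : ℕ → En 2 → ℝ} {W : En 2 → ℝ} {H : ℕ → ℂ → ℂ} {h : ℂ → ℂ},
      (∀ m, DifferentiableOn ℂ (H m) (ball 0 r)) → DifferentiableOn ℂ h (ball 0 r) →
      (∀ m, (H m 0).im = 0) → (h 0).im = 0 →
      (∀ m, ∀ z ∈ ball (0 : ℂ) r, (H m z).re = w m (planeIso z)) →
      (∀ z ∈ ball (0 : ℂ) r, (h z).re = W (planeIso z)) →
      (∀ K : Set (En 2), K ⊆ ball (0 : En 2) r → IsCompact K → TendstoUniformlyOn w W atTop K) →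
      TendstoLocallyUniformlyOn H h atTop (ball 0 r) := by
    intro w W H h hH hh hH0 hh0 hHw hhW hw
    refine tendstoLocallyUniformlyOn_of_re hr hH hh (fun m => by rw [hH0, hh0]) fun t ht => ?_
    have hsub := closedBall_subset_ball (x := (0 : ℂ)) ht
    have hT := (hw (closedBall 0 t) (closedBall_subset_ball ht)
      (isCompact_closedBall 0 t)).comp planeIso
    have hpre : planeIso ⁻¹' closedBall (0 : En 2) t = closedBall (0 : ℂ) t := by
      ext z; simp
    rw [hpre] at hT
    refine (hT.congr (Eventually.of_forall fun m z hz' => ?_)).congr_right fun z hz' => ?_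
    · exact (hHw m z (hsub hz')).symm
    · exact (hhW z (hsub hz')).symm
  obtain ⟨s, ⟨-, hsr⟩, hKs⟩ := exists_pos_lt_subset_ball hr hK.isClosed hKr
  obtain ⟨C, hC, h⟩ := eventually_abs_re_le hF hG (hconv hF hf hF0 hf0 hFu hfU hconvU)
    (hconv hG hg hG0 hg0 hGv hgV hconvV)
    (fun m z hz' h0 => by
      rw [hFu m z hz']
      exact hz m _ (planeIso_mem_ball.2 hz') (by rw [← hGv m z hz', h0]))
    (fun m z hz' => by
      rw [hFu m z hz', hGv m z hz']
      exact hsign m _ (planeIso_mem_ball.2 hz'))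
    (by
      obtain ⟨x, hx, hxV⟩ := hVne
      have hx' : planeIso.symm x ∈ ball (0 : ℂ) r := by simpa using hx
      exact ⟨planeIso.symm x, hx', by rw [hgV _ hx']; simpa using hxV⟩) hsr
  refine ⟨C, hC, h.mono fun m hm x hx => ?_⟩
  have hxs : planeIso.symm x ∈ ball (0 : ℂ) s := by simpa using hKs hx
  have hxr := ball_subset_ball hsr.le hxs
  have := hm _ hxs
  rw [hFu m _ hxr, hGv m _ hxr] at this
  simpa using this

/-- The bound `|u m| ≤ C |v m|` on compact sets holds with a constant independent of `m`. -/
lemma exists_forall_abs_le_of_harmonic {u v : ℕ → En 2 → ℝ} {U V : En 2 → ℝ} {r : ℝ} (hr : 0 < r)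
    (hu : ∀ m, HarmonicOnSet (u m) (ball 0 r)) (hv : ∀ m, HarmonicOnSet (v m) (ball 0 r))
    (hz : ∀ m, ∀ x ∈ ball (0 : En 2) r, v m x = 0 → u m x = 0)
    (hsign : ∀ m, ∀ x ∈ ball (0 : En 2) r, 0 ≤ u m x * v m x)
    (hU : HarmonicOnSet U (ball 0 r)) (hV : HarmonicOnSet V (ball 0 r))
    (hVne : ∃ x ∈ ball (0 : En 2) r, V x ≠ 0)
    (hconvU : ∀ K : Set (En 2), K ⊆ ball (0 : En 2) r → IsCompact K →
      TendstoUniformlyOn u U atTop K)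
    (hconvV : ∀ K : Set (En 2), K ⊆ ball (0 : En 2) r → IsCompact K →
      TendstoUniformlyOn v V atTop K) {K : Set (En 2)} (hK : IsCompact K)
    (hKr : K ⊆ ball (0 : En 2) r) :
    ∃ C, 0 ≤ C ∧ ∀ m, ∀ x ∈ K, |u m x| ≤ C * |v m x| := by
  obtain ⟨C, hC, h⟩ := eventually_abs_le_of_harmonic hr hu hv hz hsign hU hV hVne hconvU hconvV
    hK hKr
  have hsingle : ∀ m, ∃ D, 0 ≤ D ∧ ∀ x ∈ K, |u m x| ≤ D * |v m x| := by
    intro m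
    by_cases hm : ∃ x ∈ ball (0 : En 2) r, v m x ≠ 0
    · have hconst : ∀ (w : En 2 → ℝ) (K : Set (En 2)),
          TendstoUniformlyOn (fun _ : ℕ => w) w atTop K := fun w K s hs =>
        Eventually.of_forall fun _ _ _ => refl_mem_uniformity hs
      obtain ⟨D, hD, h⟩ := eventually_abs_le_of_harmonic (u := fun _ => u m) (v := fun _ => v m) hr
        (fun _ => hu m) (fun _ => hv m) (fun _ => hz m) (fun _ => hsign m) (hu m) (hv m) hm
        (fun K _ _ => hconst _ K) (fun K _ _ => hconst _ K) hK hKr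
      exact ⟨D, hD, h.exists.choose_spec⟩
    · push Not at hm
      exact ⟨0, le_rfl, fun x hx => by simp [hz m x (hKr hx) (hm x (hKr hx))]⟩
  choose D hD hDm using hsingle
  obtain ⟨N, hN⟩ := eventually_atTop.1 h
  have hsum : 0 ≤ ∑ i ∈ Finset.range N, D i := Finset.sum_nonneg fun i _ => hD i
  refine ⟨C + ∑ i ∈ Finset.range N, D i, by positivity, fun m x hx => ?_⟩
  rcases lt_or_ge m N with hm | hm
  · refine (hDm m x hx).trans ?_
    have := Finset.single_le_sum (fun i _ => hD i) (Finset.mem_range.2 hm)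
    gcongr
    linarith
  · refine (hN m hm x hx).trans ?_
    gcongr
    linarith

theorem stmt8 (u v : ℕ → En 2 → ℝ) (U V : En 2 → ℝ)
    (hu : ∀ m, HarmonicOnSet (u m) (ball 0 1))
    (hv : ∀ m, HarmonicOnSet (v m) (ball 0 1))
    (hz : ∀ m, zeroSet (u m) (ball 0 1) = zeroSet (v m) (ball 0 1))
    (hpos : ∀ m, ∀ x ∈ ball (0 : En 2) 1 \ zeroSet (u m) (ball 0 1), 0 < u m x * v m x)
    (hU : HarmonicOnSet U (ball 0 1)) (hV : HarmonicOnSet V (ball 0 1))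
    (hUne : ∃ x ∈ ball (0 : En 2) 1, U x ≠ 0)
    (hVne : ∃ x ∈ ball (0 : En 2) 1, V x ≠ 0)
    (hconvU : ∀ K : Set (En 2), K ⊆ ball (0 : En 2) 1 → IsCompact K →
      TendstoUniformlyOn (fun m x => u m x) U atTop K)
    (hconvV : ∀ K : Set (En 2), K ⊆ ball (0 : En 2) 1 → IsCompact K →
      TendstoUniformlyOn (fun m x => v m x) V atTop K) :
    ∀ K : Set (En 2), IsCompact K → K ⊆ ball (0 : En 2) 1 →
      ∃ C : ℝ, ∀ m, ∀ x ∈ K \ zeroSet (u m) (ball 0 1), ∀ y ∈ K \ zeroSet (u m) (ball 0 1),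
        u m x / v m x ≤ C * (u m y / v m y) := by
  intro K hK hKb
  have hzu : ∀ m, ∀ x ∈ ball (0 : En 2) 1, (v m x = 0 ↔ u m x = 0) := fun m x hx => by
    have := Set.ext_iff.1 (hz m) x
    simpa [zeroSet, mem_ball_zero_iff.1 hx] using this.symm
  have hsign : ∀ m, ∀ x ∈ ball (0 : En 2) 1, 0 ≤ u m x * v m x := fun m x hx => by
    by_cases h : u m x = 0
    · simp [h]
    · exact (hpos m x ⟨hx, fun hx' => h hx'.2⟩).le
  obtain ⟨C, hC, hCuv⟩ := exists_forall_abs_le_of_harmonic one_pos hu hv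
    (fun m x hx => (hzu m x hx).1) hsign hU hV hVne hconvU hconvV hK hKb
  obtain ⟨D, hD, hDvu⟩ := exists_forall_abs_le_of_harmonic one_pos hv hu
    (fun m x hx => (hzu m x hx).2) (fun m x hx => by rw [mul_comm]; exact hsign m x hx)
    hV hU hUne hconvV hconvU hK hKb
  have hratio : ∀ m, ∀ x ∈ K \ zeroSet (u m) (ball 0 1),
      u m x / v m x = |u m x| / |v m x| ∧ 0 < |u m x| ∧ 0 < |v m x| := fun m x hx => by
    have hp := hpos m x ⟨hKb hx.1, hx.2⟩
    refine ⟨?_, abs_pos.2 (left_ne_zero_of_mul hp.ne'), abs_pos.2 (right_ne_zero_of_mul hp.ne')⟩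
    rw [← abs_div, abs_of_pos (div_pos_iff.2 (mul_pos_iff.1 hp))]
  refine ⟨C * D, fun m x hx y hy => ?_⟩
  obtain ⟨hx1, hx2, hx3⟩ := hratio m x hx
  obtain ⟨hy1, hy2, hy3⟩ := hratio m y hy
  rw [hx1, hy1]
  calc |u m x| / |v m x| ≤ C := (div_le_iff₀ hx3).2 (hCuv m x hx.1)
    _ ≤ C * (D * (|u m y| / |v m y|)) := by
      refine le_mul_of_one_le_right hC ?_
      rw [mul_div_assoc', one_le_div hy3]
      exact hDvu m y hy.1
    _ = C * D * (|u m y| / |v m y|) := by ring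
end
end
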